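/- Let I be a finite family of d-DOPs, let C* be a closed parallelogram each of whose four sides lies on a line of L₁, and let OPT ⊆ I be an independent subfamily with cl(P) ⊆ C* for every P ∈ OPT. Then there exist a family OPT' of d-DOPs and a bijection ext : OPT → OPT' such that: (E1) OPT' is independent, cl(Q) ⊆ C* for every Q ∈ OPT', every edge of every Q ∈ OPT' lies on a line of L_{2d}, and every vertex (edge endpoint) of every Q ∈ OPT' belongs to V_{2d}; (E2) P ⊆ ext(P) for every P ∈ OPT; (E3) for every Q ∈ OPT' and every non-degenerate edge e of Q, relint(e) meets ∂Q' for some Q' ∈ OPT' with Q' ≠ Q, or relint(e) meets ∂C*. -/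

import Mathlib

open scoped Classical

noncomputable section

/-- A point of the Euclidean plane. -/
abbrev Pt : Type := ℝ × ℝ

/-- Dot product in the plane. -/
def dot2 (a b : Pt) : ℝ := a.1 * b.1 + a.2 * b.2

/-- Clockwise orthogonal rotation `v^⊥` of a vector. -/
def perp2 (w : Pt) : Pt := (w.2, -w.1)

/-- Cross product (determinant) of two plane vectors. -/
def cross2 (a b : Pt) : ℝ := a.1 * b.2 - a.2 * b.1

/-- The hypotheses on the family of direction-defining vectors `v₁, …, v_d`
(extended to all integer indices by `v_{i+d} = -v_i`, hence `2d`-periodicity):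
`d ≥ 2`, `v 1 = (0,1)`, pairwise linear independence of `v₁, …, v_d`,
`v₂, …, v_d` have negative first coordinate, and `v₂, …, v_d`
are ordered by strictly decreasing slope. -/
def DirOK (d : ℕ) (v : ℤ → Pt) : Prop :=
  2 ≤ d ∧
  v 1 = ((0 : ℝ), (1 : ℝ)) ∧
  (∀ i : ℤ, v (i + (d : ℤ)) = -v i) ∧
  (∀ i j : ℤ, 1 ≤ i → i < j → j ≤ (d : ℤ) → cross2 (v i) (v j) ≠ 0) ∧
  (∀ i : ℤ, 2 ≤ i → i ≤ (d : ℤ) → (v i).1 < 0) ∧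
  (∀ i j : ℤ, 2 ≤ i → i < j → j ≤ (d : ℤ) → (v j).2 / (v j).1 < (v i).2 / (v i).1)

/-- The open polygon `P = {x : ⟨x, v_i^⊥⟩ < p_i for all i ∈ {1,…,2d}}`. -/
def DOPset (d : ℕ) (v : ℤ → Pt) (p : ℤ → ℝ) : Set Pt :=
  {x : Pt | ∀ i ∈ Finset.Icc (1 : ℤ) (2 * (d : ℤ)), dot2 x (perp2 (v i)) < p i}

/-- The edge `e_i(P) = cl(P) ∩ {x : ⟨x, v_i^⊥⟩ = p_i}`. -/
def edgeOf (d : ℕ) (v : ℤ → Pt) (p : ℤ → ℝ) (i : ℤ) : Set Pt :=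
  closure (DOPset d v p) ∩ {x : Pt | dot2 x (perp2 (v i)) = p i}

/-- `p` (a `2d`-periodic family of offsets) defines a `d`-DOP: the corresponding open
set is nonempty and bounded, and every constraint is tight (each edge is nonempty). -/
def IsDOP (d : ℕ) (v : ℤ → Pt) (p : ℤ → ℝ) : Prop :=
  (DOPset d v p).Nonempty ∧
  Bornology.IsBounded (DOPset d v p) ∧
  (∀ i : ℤ, p (i + 2 * (d : ℤ)) = p i) ∧
  ∀ i ∈ Finset.Icc (1 : ℤ) (2 * (d : ℤ)), (edgeOf d v p i).Nonempty

/-- `te` and `he` are the tail and the head of the (possibly degenerate) segment `e`,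
oriented along `v i`:  `e = [te, he]` and `he - te` is a nonnegative multiple of `v i`. -/
def IsTH (v : ℤ → Pt) (i : ℤ) (e : Set Pt) (te he : Pt) : Prop :=
  e = segment ℝ te he ∧ ∃ c : ℝ, 0 ≤ c ∧ he - te = c • v i

/-- The pair (tail, head) of the edge `e_i(P)` (chosen by the characterizing property). -/
def THpair (d : ℕ) (v : ℤ → Pt) (p : ℤ → ℝ) (i : ℤ) : Pt × Pt :=
  if h : ∃ th : Pt × Pt, IsTH v i (edgeOf d v p i) th.1 th.2 then h.choose
  else (0 : Pt × Pt)

/-- The tail `t(e_i(P))` of the edge `e_i(P)`. -/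
def tlPt (d : ℕ) (v : ℤ → Pt) (p : ℤ → ℝ) (i : ℤ) : Pt := (THpair d v p i).1

/-- The head `h(e_i(P))` of the edge `e_i(P)`. -/
def hdPt (d : ℕ) (v : ℤ → Pt) (p : ℤ → ℝ) (i : ℤ) : Pt := (THpair d v p i).2

/-- The relative interior of the edge `e_i(P)`: the segment minus its two endpoints. -/
def relintE (d : ℕ) (v : ℤ → Pt) (p : ℤ → ℝ) (i : ℤ) : Set Pt :=
  segment ℝ (tlPt d v p i) (hdPt d v p i) \ {tlPt d v p i, hdPt d v p i}

/-- A family of `d`-DOPs is independent: members are pairwise distinct (as sets)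
and no two of them meet as open sets. -/
def Indep (d : ℕ) (v : ℤ → Pt) (OPT : Set (ℤ → ℝ)) : Prop :=
  ∀ p ∈ OPT, ∀ q ∈ OPT, p ≠ q →
    DOPset d v p ≠ DOPset d v q ∧ DOPset d v p ∩ DOPset d v q = ∅

/-- `P` sees `P'` with respect to the charging option `(v_i, a)`, where the Boolean
`a = true` stands for the option `h` (head) and `a = false` for `t` (tail):
the edge `e = e_i(P)` is non-degenerate and `(¬a)(e') ∈ relint(e) ∪ {a(e)}`
where `e' = e_{i+d}(P')`. -/
def SeesOpt (d : ℕ) (v : ℤ → Pt) (p p' : ℤ → ℝ) (i : ℤ) (a : Bool) : Prop :=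
  tlPt d v p i ≠ hdPt d v p i ∧
  (if a then tlPt d v p' (i + (d : ℤ)) else hdPt d v p' (i + (d : ℤ))) ∈
    relintE d v p i ∪ {if a then hdPt d v p i else tlPt d v p i}

/-- `P ∈ OPT` is accountable with respect to the charging option `(v_i, a)`. -/
def Accountable (d : ℕ) (v : ℤ → Pt) (OPT : Set (ℤ → ℝ)) (p : ℤ → ℝ) (i : ℤ)
    (a : Bool) : Prop :=
  ∃ p' ∈ OPT, SeesOpt d v p p' i a

/-- Condition (E4): for every `P ∈ OPT` and every non-degenerate edge `e` of `P`,
`relint(e)` meets the boundary of another polygon of `OPT` or the boundary of `C*`. -/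
def E4cond (d : ℕ) (v : ℤ → Pt) (OPT : Set (ℤ → ℝ)) (Cstar : Set Pt) : Prop :=
  ∀ p ∈ OPT, ∀ i ∈ Finset.Icc (1 : ℤ) (2 * (d : ℤ)),
    tlPt d v p i ≠ hdPt d v p i →
    (∃ q ∈ OPT, DOPset d v q ≠ DOPset d v p ∧
      (relintE d v p i ∩ frontier (DOPset d v q)).Nonempty) ∨
    (relintE d v p i ∩ frontier Cstar).Nonempty

/-- A (closed) parallelogram in the plane. -/
def IsParallelogram (C : Set Pt) : Prop :=
  ∃ a u w : Pt, cross2 u w ≠ 0 ∧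
    C = (fun st : ℝ × ℝ => a + st.1 • u + st.2 • w) ''
      {st : ℝ × ℝ | st.1 ∈ Set.Icc (0 : ℝ) 1 ∧ st.2 ∈ Set.Icc (0 : ℝ) 1}

/-- `P` is a corner polygon in `C*`: all of its edges except exactly one are
contained in `∂C*`. -/
def CornerPoly (d : ℕ) (v : ℤ → Pt) (p : ℤ → ℝ) (Cstar : Set Pt) : Prop :=
  ∃ i ∈ Finset.Icc (1 : ℤ) (2 * (d : ℤ)),
    ¬ edgeOf d v p i ⊆ frontier Cstar ∧
    ∀ j ∈ Finset.Icc (1 : ℤ) (2 * (d : ℤ)), j ≠ i → edgeOf d v p j ⊆ frontier Cstar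

/-- `x` is a vertex (an edge endpoint) of the polygon `P`. -/
def VertexOf (d : ℕ) (v : ℤ → Pt) (p : ℤ → ℝ) (x : Pt) : Prop :=
  ∃ i ∈ Finset.Icc (1 : ℤ) (2 * (d : ℤ)), x = tlPt d v p i ∨ x = hdPt d v p i

/-- The line through `a` with direction `w`. -/
def lineThr (a w : Pt) : Set Pt := {x : Pt | ∃ t : ℝ, x = a + t • w}

/-- `L₁`: the lines in directions `v₁, …, v_d` through the vertices of the polygons
of the input family `I`. -/
def LOne (d : ℕ) (v : ℤ → Pt) (I : Set (ℤ → ℝ)) : Set (Set Pt) :=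
  {l : Set Pt | ∃ i : ℤ, 1 ≤ i ∧ i ≤ (d : ℤ) ∧
    ∃ x : Pt, (∃ p ∈ I, VertexOf d v p x) ∧ l = lineThr x (v i)}

/-- The points lying on two non-parallel (hence distinct) lines of `L`. -/
def Vof (L : Set (Set Pt)) : Set Pt :=
  {x : Pt | ∃ l₁ ∈ L, ∃ l₂ ∈ L, l₁ ≠ l₂ ∧ x ∈ l₁ ∧ x ∈ l₂}

/-- The lines in directions `v₁, …, v_d` through the points of `V`. -/
def Lnext (d : ℕ) (v : ℤ → Pt) (V : Set Pt) : Set (Set Pt) :=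
  {l : Set Pt | ∃ i : ℤ, 1 ≤ i ∧ i ≤ (d : ℤ) ∧ ∃ a ∈ V, l = lineThr a (v i)}

/-- The recursively defined families of lines `L_k` (with `L_0 := ∅`). -/
def Lgrid (d : ℕ) (v : ℤ → Pt) (I : Set (ℤ → ℝ)) : ℕ → Set (Set Pt)
  | 0 => ∅
  | 1 => LOne d v I
  | (k + 2) => Lnext d v (Vof (Lgrid d v I (k + 1)))

/-- The grid points `V_k`. -/
def Vgrid (d : ℕ) (v : ℤ → Pt) (I : Set (ℤ → ℝ)) (k : ℕ) : Set Pt :=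
  Vof (Lgrid d v I k)



set_option linter.unusedSectionVars false
set_option linter.deprecated false

/-- Properly ordered directions: counterclockwise, antiperiodic. -/
structure Good (d : ℕ) (w : ℤ → Pt) : Prop where
  hd : 2 ≤ d
  neg : ∀ i : ℤ, w (i + (d : ℤ)) = -w i
  pos : ∀ i j : ℤ, i < j → j < i + (d : ℤ) → 0 < cross2 (w i) (w j)

/-- The linear functional of direction `i`. -/
def NN (w : ℤ → Pt) (i : ℤ) (x : Pt) : ℝ := cross2 x (w i)

/-- Intersection of the lines `i` and `i+1`. -/
def XX (w : ℤ → Pt) (p : ℤ → ℝ) (i : ℤ) : Pt :=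
  (cross2 (w i) (w (i+1)))⁻¹ • (p (i+1) • w i - p i • w (i+1))

/-- Open polygon (all integer indices). -/
def Op (w : ℤ → Pt) (p : ℤ → ℝ) : Set Pt := {x | ∀ i, NN w i x < p i}

/-- Closed polygon (all integer indices). -/
def Kc (w : ℤ → Pt) (p : ℤ → ℝ) : Set Pt := {x | ∀ i, NN w i x ≤ p i}

/-- Tight polygon data. -/
structure DP (d : ℕ) (w : ℤ → Pt) (p : ℤ → ℝ) : Prop where
  per : ∀ i, p (i + 2 * (d : ℤ)) = p i
  ne : ∃ x, ∀ i, NN w i x < p i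
  tight : ∀ i j, NN w j (XX w p i) ≤ p j

/-- Relative interior of the edge `i`. -/
def RR (d : ℕ) (w : ℤ → Pt) (p : ℤ → ℝ) (i : ℤ) : Set Pt :=
  {x | NN w i x = p i ∧ ∀ j, ¬ (2 * (d : ℤ)) ∣ (j - i) → NN w j x < p j}

/-- Non-degenerate edge. -/
def Nd (w : ℤ → Pt) (p : ℤ → ℝ) (i : ℤ) : Prop := XX w p (i-1) ≠ XX w p i

/-- Separation of two polygons by a direction. -/
def SepD (d : ℕ) (p q : ℤ → ℝ) : Prop := ∃ i : ℤ, p i + q (i + (d : ℤ)) ≤ 0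

theorem per_dvd {d : ℕ} {α : Type*} {f : ℤ → α} (hf : ∀ i, f (i + 2 * (d : ℤ)) = f i)
    {i j : ℤ} (h : (2 * (d : ℤ)) ∣ (i - j)) : f i = f j := by
  obtain ⟨n, hn⟩ := h
  have hi : i = j + n * (2 * (d : ℤ)) := by linarith
  have hp : Function.Periodic f (2 * (d : ℤ)) := hf
  rw [hi]
  exact (hp.int_mul n) j

theorem NN_add (w : ℤ → Pt) (i : ℤ) (x y : Pt) : NN w i (x + y) = NN w i x + NN w i y := by
  simp only [NN, cross2, Prod.fst_add, Prod.snd_add]; ring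

theorem NN_sub (w : ℤ → Pt) (i : ℤ) (x y : Pt) : NN w i (x - y) = NN w i x - NN w i y := by
  simp only [NN, cross2, Prod.fst_sub, Prod.snd_sub]; ring

theorem NN_smul (w : ℤ → Pt) (i : ℤ) (t : ℝ) (y : Pt) : NN w i (t • y) = t * NN w i y := by
  simp only [NN, cross2, Prod.smul_fst, Prod.smul_snd, smul_eq_mul]; ring

theorem NN_line (w : ℤ → Pt) (i : ℤ) (x y : Pt) (t : ℝ) :
    NN w i (x + t • y) = NN w i x + t * NN w i y := by
  rw [NN_add, NN_smul]

theorem NN_w (w : ℤ → Pt) (i j : ℤ) : NN w i (w j) = cross2 (w j) (w i) := rfl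

theorem cross_anti (a b : Pt) : cross2 a b = - cross2 b a := by
  simp only [cross2]; ring

theorem cross2_self (a : Pt) : cross2 a a = 0 := by
  simp only [cross2]; ring

theorem NN_cont (w : ℤ → Pt) (i : ℤ) : Continuous (NN w i) := by
  unfold NN cross2; fun_prop

/-- Three-term identity. -/
theorem three (w : ℤ → Pt) (a j b : ℤ) (x : Pt) :
    cross2 (w a) (w b) * NN w j x =
      cross2 (w j) (w b) * NN w a x + cross2 (w a) (w j) * NN w b x := by
  simp only [NN, cross2]; ring

namespace Good
variable {d : ℕ} {w : ℤ → Pt} (hw : Good d w)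
include hw

theorem per (i : ℤ) : w (i + 2 * (d : ℤ)) = w i := by
  have : i + 2 * (d : ℤ) = (i + d) + d := by ring
  rw [this, hw.neg, hw.neg, neg_neg]

theorem pos1 (i : ℤ) : 0 < cross2 (w i) (w (i+1)) := by
  have := hw.hd
  exact hw.pos i (i+1) (by omega) (by omega)

theorem pos1' (i : ℤ) : 0 < cross2 (w (i-1)) (w i) := by
  have := hw.pos1 (i-1)
  rwa [sub_add_cancel] at this

theorem NN_d (i : ℤ) (x : Pt) : NN w (i + d) x = - NN w i x := by
  simp only [NN, hw.neg, cross2, Prod.fst_neg, Prod.snd_neg]; ring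

theorem NN_per (i : ℤ) (x : Pt) : NN w (i + 2 * (d : ℤ)) x = NN w i x := by
  simp only [NN, hw.per]

theorem NN_X (p : ℤ → ℝ) (i : ℤ) : NN w i (XX w p i) = p i := by
  have h := hw.pos1 i
  rw [XX, NN_smul, NN_sub, NN_smul, NN_smul, NN_w, NN_w, cross2_self,
    cross_anti (w (i+1)) (w i)]
  field_simp; ring

theorem NN_X1 (p : ℤ → ℝ) (i : ℤ) : NN w (i+1) (XX w p i) = p (i+1) := by
  have h := hw.pos1 i
  rw [XX, NN_smul, NN_sub, NN_smul, NN_smul, NN_w, NN_w, cross2_self]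
  field_simp; ring

theorem NN_X1' (p : ℤ → ℝ) (i : ℤ) : NN w i (XX w p (i-1)) = p i := by
  have := hw.NN_X1 p (i-1)
  rwa [sub_add_cancel] at this

/-- two points on the same line of direction `i` -/
theorem par (i : ℤ) (x y : Pt) (h : NN w i x = NN w i y) : ∃ t : ℝ, x = y + t • w i := by
  have h1 := hw.pos1 i
  refine ⟨NN w (i+1) (x - y) / cross2 (w i) (w (i+1)), ?_⟩
  have h0 : NN w i (x - y) = 0 := by rw [NN_sub, h, sub_self]
  simp only [NN, cross2] at *
  set D := (w i).1 * (w (i+1)).2 - (w i).2 * (w (i+1)).1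
  have hD : D ≠ 0 := h1.ne'
  ext
  · simp only [Prod.fst_add, Prod.smul_fst, smul_eq_mul]
    simp only [Prod.fst_sub, Prod.snd_sub] at *
    field_simp
    simp only [D]
    linear_combination (-(w (i+1)).1) * h0
  · simp only [Prod.snd_add, Prod.smul_snd, smul_eq_mul]
    simp only [Prod.fst_sub, Prod.snd_sub] at *
    field_simp
    simp only [D]
    linear_combination (-(w (i+1)).2) * h0

/-- two coordinates determine a point -/
theorem ext2 (i j : ℤ) (hij : cross2 (w i) (w j) ≠ 0) (x y : Pt)
    (h1 : NN w i x = NN w i y) (h2 : NN w j x = NN w j y) : x = y := by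
  obtain ⟨t, rfl⟩ := hw.par i x y h1
  rw [NN_line, NN_w] at h2
  have : t * cross2 (w i) (w j) = 0 := by linarith
  rcases mul_eq_zero.1 this with h | h
  · simp [h]
  · exact absurd h hij

/-- reduce an index modulo `d` -/
theorem red (i j : ℤ) : ∃ j' n : ℤ, i ≤ j' ∧ j' < i + d ∧ j = j' + n * d := by
  have hd := hw.hd
  refine ⟨i + (j - i) % d, (j - i) / d, ?_, ?_, ?_⟩
  · have := Int.emod_nonneg (j - i) (b := (d : ℤ)) (by omega); omega
  · have := Int.emod_lt_of_pos (j - i) (b := (d : ℤ)) (by omega); omega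
  · have := Int.emod_add_mul_ediv (j - i) d; linarith

theorem w_mul (i n : ℤ) : w (i + n * d) = w i ∨ w (i + n * d) = - w i := by
  have hp : Function.Antiperiodic w (d : ℤ) := hw.neg
  rcases Int.even_or_odd n with h | h
  · left
    obtain ⟨k, rfl⟩ := h
    have h2 : Function.Periodic w (2 * (d : ℤ)) := hw.per
    rw [show i + (k + k) * (d : ℤ) = i + k * (2 * d) by ring]
    exact (h2.int_mul k) i
  · right
    obtain ⟨k, rfl⟩ := h
    have h2 : Function.Periodic w (2 * (d : ℤ)) := hw.per
    rw [show i + (2 * k + 1) * (d : ℤ) = (i + d) + k * (2 * d) by ring]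
    exact ((h2.int_mul k) (i + d)).trans (hw.neg i)

theorem cross_eq_zero (i j : ℤ) (h : cross2 (w i) (w j) = 0) : (d : ℤ) ∣ (j - i) := by
  obtain ⟨j', n, h1, h2, rfl⟩ := hw.red i j
  have h0 : cross2 (w i) (w j') = 0 := by
    rcases hw.w_mul j' n with e | e
    · rwa [e] at h
    · rw [e] at h
      simp only [cross2, Prod.fst_neg, Prod.snd_neg] at *; linarith
  rcases h1.lt_or_eq with h3 | h3
  · exact absurd h0 (hw.pos i j' h3 h2).ne'
  · exact ⟨n, by rw [← h3]; ring⟩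

/-- `j ≡ i` mod `d` but not mod `2d` means `j ≡ i + d`. -/
theorem dvd_cases (i j : ℤ) (h : (d : ℤ) ∣ (j - i)) (h2 : ¬ (2 * (d : ℤ)) ∣ (j - i)) :
    (2 * (d : ℤ)) ∣ (j - (i + d)) := by
  obtain ⟨n, hn⟩ := h
  rcases Int.even_or_odd n with ⟨k, hk⟩ | ⟨k, hk⟩
  · exact absurd ⟨k, by rw [hn, hk]; ring⟩ h2
  · exact ⟨k, by rw [hk] at hn; linear_combination hn⟩

theorem not_dvd_of_lt (i : ℤ) (h1 : 0 < i) (h2 : i < 2 * d) : ¬ (2 * (d : ℤ)) ∣ i := by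
  intro h
  have := Int.le_of_dvd h1 h
  omega

theorem not_dvd_of_lt' (i : ℤ) (h1 : i < 0) (h2 : - (2 * d) < i) : ¬ (2 * (d : ℤ)) ∣ i := by
  intro h
  exact hw.not_dvd_of_lt (-i) (by omega) (by omega) ((dvd_neg).2 h)

theorem X_per {p : ℤ → ℝ} (hp : ∀ i, p (i + 2 * (d : ℤ)) = p i) (i : ℤ) :
    XX w p (i + 2 * (d : ℤ)) = XX w p i := by
  unfold XX
  have e : i + 2 * (d : ℤ) + 1 = (i + 1) + 2 * d := by ring
  rw [e, hp, hp, hw.per, hw.per]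

theorem Nd_per {p : ℤ → ℝ} (hp : ∀ i, p (i + 2 * (d : ℤ)) = p i) (i : ℤ) :
    Nd w p (i + 2 * (d : ℤ)) = Nd w p i := by
  unfold Nd
  have e : i + 2 * (d : ℤ) - 1 = (i - 1) + 2 * d := by ring
  rw [e, hw.X_per hp, hw.X_per hp]

theorem R_congr {p : ℤ → ℝ} (hp : ∀ i, p (i + 2 * (d : ℤ)) = p i) {i j : ℤ}
    (h : (2 * (d : ℤ)) ∣ (i - j)) : RR d w p i = RR d w p j := by
  have e1 : w i = w j := per_dvd hw.per h
  have e2 : p i = p j := per_dvd hp h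
  ext x
  simp only [RR, Set.mem_setOf_eq, NN, e1, e2]
  have : ∀ k, (2 * (d : ℤ)) ∣ (k - i) ↔ (2 * (d : ℤ)) ∣ (k - j) := by
    intro k
    rw [show k - j = (k - i) + (i - j) by ring]
    exact (Int.dvd_add_left h).symm
  simp only [this]

end Good

namespace DP
variable {d : ℕ} {w : ℤ → Pt} (hw : Good d w) {p : ℤ → ℝ} (hp : DP d w p)
include hw hp

theorem width (i : ℤ) : 0 < p i + p (i + d) := by
  obtain ⟨x, hx⟩ := hp.ne
  have h1 := hx i
  have h2 := hx (i + d)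
  rw [hw.NN_d] at h2
  linarith

theorem X_mem (i : ℤ) : XX w p i ∈ Kc w p := fun j => hp.tight i j

/-- oriented edge -/
theorem edge (i : ℤ) : ∃ t : ℝ, 0 ≤ t ∧ XX w p i = XX w p (i-1) + t • w i := by
  obtain ⟨t, ht⟩ := hw.par i (XX w p i) (XX w p (i-1)) (by rw [hw.NN_X, hw.NN_X1'])
  refine ⟨t, ?_, ht⟩
  have h1 := hp.tight (i-1) (i+1)
  have h2 := hw.NN_X1 p i
  rw [ht, NN_line, NN_w] at h2
  have h3 := hw.pos1 i
  by_contra h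
  push Not at h
  nlinarith

/-- points of the closed polygon on the line `i` -/
theorem on_line (i : ℤ) {t : ℝ} (ht : XX w p i = XX w p (i-1) + t • w i) {y : Pt}
    (hy : y ∈ Kc w p) (hyi : NN w i y = p i) :
    ∃ s : ℝ, 0 ≤ s ∧ s ≤ t ∧ y = XX w p (i-1) + s • w i := by
  obtain ⟨s, hs⟩ := hw.par i y (XX w p (i-1)) (by rw [hyi, hw.NN_X1'])
  refine ⟨s, ?_, ?_, hs⟩
  · have h1 := hy (i-1)
    have h2 := hw.NN_X p (i-1)
    have h3 := hw.pos1' i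
    rw [hs, NN_line, NN_w, cross_anti] at h1
    by_contra h; push Not at h
    nlinarith
  · have h1 := hy (i+1)
    have h2 := hw.NN_X1 p i
    rw [ht, NN_line, NN_w] at h2
    rw [hs, NN_line, NN_w] at h1
    have h3 := hw.pos1 i
    by_contra h; push Not at h
    nlinarith

theorem eq_X_of_not_Nd (i : ℤ) (h : ¬ Nd w p i) {y : Pt}
    (hy : y ∈ Kc w p) (hyi : NN w i y = p i) : y = XX w p i := by
  unfold Nd at h
  push Not at h
  have ht : XX w p i = XX w p (i-1) + (0:ℝ) • w i := by simp [h]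
  obtain ⟨s, h1, h2, h3⟩ := hp.on_line hw i ht hy hyi
  have : s = 0 := le_antisymm h2 h1
  rw [h3, this, h]; simp

theorem mem_R_of (i : ℤ) {t s : ℝ} (ht : XX w p i = XX w p (i-1) + t • w i)
    (h0 : 0 < s) (h1 : s < t) : XX w p (i-1) + s • w i ∈ RR d w p i := by
  refine ⟨by rw [NN_line, NN_w, cross2_self, hw.NN_X1']; ring, fun j hj => ?_⟩
  have ha := hp.tight (i-1) j
  have hb := hp.tight i j
  rw [ht, NN_line] at hb
  rw [NN_line]
  by_contra hcon
  push Not at hcon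
  have hz : NN w j (w i) = 0 := by
    by_contra hne
    rcases lt_or_gt_of_ne hne with h | h <;> nlinarith
  have hd := hw.dvd_cases i j (hw.cross_eq_zero i j hz) hj
  have e1 : w j = w (i + d) := per_dvd hw.per hd
  have e2 : p j = p (i + d) := per_dvd hp.per hd
  have e3 : NN w j (XX w p (i-1)) = - p i := by
    have : NN w j (XX w p (i-1)) = NN w (i+d) (XX w p (i-1)) := by simp only [NN, e1]
    rw [this, hw.NN_d, hw.NN_X1']
  have := hp.width hw i
  rw [hz, e3] at hcon
  linarith

theorem R_nonempty (i : ℤ) (h : Nd w p i) : (RR d w p i).Nonempty := by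
  obtain ⟨t, h0, ht⟩ := hp.edge hw i
  have : t ≠ 0 := by
    rintro rfl
    apply h; rw [ht]; simp
  have : 0 < t := lt_of_le_of_ne h0 this.symm
  exact ⟨_, hp.mem_R_of hw i ht (s := t/2) (by linarith) (by linarith)⟩

omit hp in
theorem R_sub (hp : DP d w p) (i : ℤ) {x : Pt} (hx : x ∈ RR d w p i) : x ∈ Kc w p := by
  intro j
  by_cases h : (2 * (d : ℤ)) ∣ (j - i)
  · have e1 : w j = w i := per_dvd hw.per h
    have e2 : p j = p i := per_dvd hp.per h
    have := hx.1
    simp only [NN] at *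
    rw [e1, e2, this]
  · exact (hx.2 j h).le

theorem R_param (i : ℤ) {t : ℝ} (ht : XX w p i = XX w p (i-1) + t • w i) {y : Pt}
    (hy : y ∈ RR d w p i) : ∃ s : ℝ, 0 < s ∧ s < t ∧ y = XX w p (i-1) + s • w i := by
  obtain ⟨s, h1, h2, h3⟩ := hp.on_line hw i ht (R_sub hw hp i hy) hy.1
  have hd := hw.hd
  refine ⟨s, lt_of_le_of_ne h1 ?_, lt_of_le_of_ne h2 ?_, h3⟩
  · rintro rfl
    have := hy.2 (i-1) (hw.not_dvd_of_lt' _ (by omega) (by omega))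
    rw [h3, zero_smul, add_zero, hw.NN_X] at this
    exact lt_irrefl _ this
  · rintro rfl
    have := hy.2 (i+1) (hw.not_dvd_of_lt _ (by omega) (by omega))
    rw [h3, ← ht, hw.NN_X1] at this
    exact lt_irrefl _ this

theorem Nd_of_R (i : ℤ) (h : (RR d w p i).Nonempty) : Nd w p i := by
  obtain ⟨y, hy⟩ := h
  obtain ⟨t, h0, ht⟩ := hp.edge hw i
  obtain ⟨s, h1, h2, -⟩ := hp.R_param hw i ht hy
  intro he
  have h3 := hw.pos1 i
  have h4 : NN w (i+1) (XX w p i) = NN w (i+1) (XX w p (i-1)) + t * NN w (i+1) (w i) := by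
    conv_lhs => rw [ht]
    rw [NN_line]
  rw [← he, NN_w] at h4
  nlinarith

omit hw in
theorem chain (a : ℤ) (n : ℕ) (h : ∀ i, a < i → i ≤ a + n → ¬ Nd w p i) :
    XX w p a = XX w p (a + n) := by
  induction n with
  | zero => simp
  | succ n ih =>
    rw [ih (fun i h1 h2 => h i h1 (by push_cast; omega))]
    have := h (a + (n+1 : ℕ)) (by push_cast; omega) le_rfl
    unfold Nd at this
    push Not at this
    rw [← this]; congr 1; push_cast; ring

omit hw in
theorem chain' (a b : ℤ) (hab : a ≤ b) (h : ∀ i, a < i → i ≤ b → ¬ Nd w p i) :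
    XX w p a = XX w p b := by
  obtain ⟨n, rfl⟩ := Int.le.dest hab
  exact hp.chain a n h

theorem noRun (a : ℤ) (h : ∀ i, a < i → i < a + d → ¬ Nd w p i) : False := by
  have hd := hw.hd
  have h1 := hp.chain' a (a + d - 1) (by omega) (fun i h1 h2 => h i h1 (by omega))
  have h2 := hw.NN_X p a
  have h3 := hw.NN_X1' p (a + d)
  rw [← h1, hw.NN_d, h2] at h3
  have := hp.width hw a
  linarith

/-- neighbours of a degenerate edge -/
theorem nbrs (j : ℤ) (h : ¬ Nd w p j) : ∃ a b : ℤ, j - d < a ∧ a < j ∧ j < b ∧ b < j + d ∧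
    b < a + d ∧ Nd w p a ∧ Nd w p b ∧ NN w a (XX w p j) = p a ∧ NN w b (XX w p j) = p b := by
  have hd := hw.hd
  obtain ⟨a, ⟨ha1, ha2⟩, hamax⟩ := Int.exists_greatest_of_bdd (P := fun a => a < j ∧ Nd w p a)
    ⟨j, fun z hz => hz.1.le⟩ (by
      by_contra hc
      push Not at hc
      exact hp.noRun hw (j - d) (fun i _ h2 => hc i (by omega)))
  obtain ⟨b, ⟨hb1, hb2⟩, hbmin⟩ := Int.exists_least_of_bdd (P := fun a => j < a ∧ Nd w p a)
    ⟨j, fun z hz => hz.1.le⟩ (by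
      by_contra hc
      push Not at hc
      exact hp.noRun hw j (fun i h2 _ => hc i h2))
  have key : ∀ i, a < i → i < b → ¬ Nd w p i := by
    intro i h1 h2 h3
    rcases lt_trichotomy i j with h4 | h4 | h4
    · have := hamax i ⟨h4, h3⟩; omega
    · exact h (h4 ▸ h3)
    · have := hbmin i ⟨h4, h3⟩; omega
  have hba : b < a + d := by
    by_contra hc
    exact hp.noRun hw a (fun i h1 h2 => key i h1 (by omega))
  refine ⟨a, b, by omega, ha1, hb1, by omega, hba, ha2, hb2, ?_, ?_⟩
  · rw [← hp.chain' a j ha1.le (fun i h1 h2 => key i h1 (by omega)), hw.NN_X]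
  · rw [hp.chain' j (b-1) (by omega) (fun i h1 h2 => key i (by omega) (by omega)), hw.NN_X1']

/-- a degenerate constraint is implied by its neighbours -/
theorem nbrs' (j : ℤ) (h : ¬ Nd w p j) : ∃ a b : ℤ, j - d < a ∧ a < j ∧ j < b ∧ b < j + d ∧
    b < a + d ∧ Nd w p a ∧ Nd w p b ∧ ∃ A B : ℝ, 0 < A ∧ 0 < B ∧
      (∀ x, NN w j x = A * NN w a x + B * NN w b x) ∧ p j = A * p a + B * p b := by
  obtain ⟨a, b, h1, h2, h3, h4, h5, h6, h7, h8, h9⟩ := hp.nbrs hw j h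
  have c1 := hw.pos a b (by omega) h5
  have c2 := hw.pos j b h3 h4
  have c3 := hw.pos a j h2 (by omega)
  have key : ∀ x, NN w j x = cross2 (w j) (w b) / cross2 (w a) (w b) * NN w a x
      + cross2 (w a) (w j) / cross2 (w a) (w b) * NN w b x := by
    intro x
    have := three w a j b x
    field_simp
    linarith
  refine ⟨a, b, h1, h2, h3, h4, h5, h6, h7, _, _, div_pos c2 c1, div_pos c3 c1, key, ?_⟩
  have := key (XX w p j)
  rwa [h8, h9, hw.NN_X] at this

end DP


theorem SepD.symm {d : ℕ} {p q : ℤ → ℝ} (hp : ∀ i, p (i + 2 * (d : ℤ)) = p i)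
    (h : SepD d p q) : SepD d q p := by
  obtain ⟨i, hi⟩ := h
  refine ⟨i + d, ?_⟩
  have : i + d + d = i + 2 * (d : ℤ) := by ring
  rw [this, hp]; linarith

theorem SepD.mono {d : ℕ} {p q p' q' : ℤ → ℝ} (h : SepD d p q) (h1 : ∀ i, p' i ≤ p i)
    (h2 : ∀ i, q' i ≤ q i) : SepD d p' q' := by
  obtain ⟨i, hi⟩ := h
  exact ⟨i, by linarith [h1 i, h2 (i + d)]⟩

theorem Kc_mono {w : ℤ → Pt} {p q : ℤ → ℝ} (h : ∀ i, p i ≤ q i) : Kc w p ⊆ Kc w q :=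
  fun _ hx i => (hx i).trans (h i)

namespace Good
variable {d : ℕ} {w : ℤ → Pt} (hw : Good d w)
include hw

theorem NN_congr {i j : ℤ} (h : (2 * (d : ℤ)) ∣ (i - j)) (x : Pt) : NN w i x = NN w j x := by
  simp only [NN, per_dvd hw.per h]

theorem sep_disj {p q : ℤ → ℝ} (h : SepD d p q) {x : Pt} (hx : x ∈ Op w p) (hy : x ∈ Kc w q) :
    False := by
  obtain ⟨i, hi⟩ := h
  have h1 := hx i
  have h2 := hy (i + d)
  rw [hw.NN_d] at h2
  linarith

theorem sep_touch {p q : ℤ → ℝ} (hp : ∀ i, p (i + 2 * (d : ℤ)) = p i)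
    (hq : ∀ i, q (i + 2 * (d : ℤ)) = q i) {m : ℤ} {x : Pt} (h : SepD d p q)
    (hx : x ∈ RR d w p m) (hxq : x ∈ Kc w q) : p m + q (m + d) = 0 := by
  obtain ⟨i, hi⟩ := h
  have h2 := hxq (i + d)
  rw [hw.NN_d] at h2
  by_cases hm : (2 * (d : ℤ)) ∣ (i - m)
  · have e1 := per_dvd hp hm
    have e2 : q (i + d) = q (m + d) := per_dvd hq (by simpa using hm)
    have e3 := hw.NN_congr hm x
    have e4 := hx.1
    rw [e1, e2] at hi
    rw [e2] at h2
    linarith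
  · have := hx.2 i hm
    linarith

/-- reduce an index modulo `2d` -/
theorem red2 (i j : ℤ) : ∃ j' : ℤ, i ≤ j' ∧ j' < i + 2 * d ∧ (2 * (d : ℤ)) ∣ (j - j') := by
  have hd := hw.hd
  refine ⟨i + (j - i) % (2 * d), ?_, ?_, ?_⟩
  · have := Int.emod_nonneg (j - i) (b := 2 * (d : ℤ)) (by omega); omega
  · have := Int.emod_lt_of_pos (j - i) (b := 2 * (d : ℤ)) (by omega); omega
  · refine ⟨(j - i) / (2 * d), ?_⟩
    have := Int.emod_add_mul_ediv (j - i) (2 * d); linarith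

theorem cross_neg (i j : ℤ) (h1 : i + d < j) (h2 : j < i + 2 * d) : cross2 (w i) (w j) < 0 := by
  have h := hw.pos i (j - d) (by omega) (by omega)
  have e := hw.neg (j - d)
  rw [sub_add_cancel] at e
  rw [e]
  simp only [cross2, Prod.fst_neg, Prod.snd_neg] at *
  linarith

theorem cross_d (i : ℤ) : cross2 (w i) (w (i + d)) = 0 := by
  rw [hw.neg]
  simp only [cross2, Prod.fst_neg, Prod.snd_neg]; ring

theorem adj_sign (i j : ℤ) : NN w j (w i) ≤ 0 ∨ 0 ≤ NN w j (w (i+1)) := by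
  obtain ⟨j', h1, h2, h3⟩ := hw.red2 i j
  have hd := hw.hd
  rw [hw.NN_congr h3, hw.NN_congr h3, NN_w, NN_w]
  rcases h1.lt_or_eq with h | h
  · rcases lt_trichotomy j' (i + d) with h4 | h4 | h4
    · right
      rcases (show i + 1 ≤ j' by omega).lt_or_eq with h5 | h5
      · exact (hw.pos (i+1) j' h5 (by omega)).le
      · rw [h5, cross2_self]
    · left; rw [h4, hw.cross_d]
    · left; exact (hw.cross_neg i j' h4 h2).le
  · left; rw [← h, cross2_self]

theorem recon (x : Pt) : x = (cross2 (w 0) (w 1))⁻¹ • (NN w 1 x • w 0 - NN w 0 x • w 1) := by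
  have h1 := hw.pos1 0
  rw [zero_add] at h1
  have := h1.ne'
  ext
  · simp only [NN, cross2, Prod.smul_fst, Prod.fst_sub, smul_eq_mul] at *
    field_simp; ring
  · simp only [NN, cross2, Prod.smul_snd, Prod.snd_sub, smul_eq_mul] at *
    field_simp; ring

theorem Kc_compact (r : ℤ → ℝ) : IsCompact (Kc w r) := by
  let f : ℝ × ℝ → Pt := fun s => (cross2 (w 0) (w 1))⁻¹ • (s.2 • w 0 - s.1 • w 1)
  have hf : Continuous f := by fun_prop
  have hc : IsCompact (f '' (Set.Icc (-r (0 + d)) (r 0) ×ˢ Set.Icc (-r (1 + d)) (r 1))) :=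
    (isCompact_Icc.prod isCompact_Icc).image hf
  refine hc.of_isClosed_subset ?_ ?_
  · have : Kc w r = ⋂ i, {x | NN w i x ≤ r i} := by ext x; simp [Kc]
    rw [this]
    exact isClosed_iInter fun i => isClosed_le (NN_cont w i) continuous_const
  · intro x hx
    refine ⟨(NN w 0 x, NN w 1 x), ⟨⟨?_, hx 0⟩, ⟨?_, hx 1⟩⟩, (hw.recon x).symm⟩
    · have := hx (0 + d); rw [hw.NN_d] at this; simp only; linarith
    · have := hx (1 + d); rw [hw.NN_d] at this; simp only; linarith

theorem tighten {p r : ℤ → ℝ} (hp : DP d w p) (hr : ∀ i, r (i + 2 * (d : ℤ)) = r i)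
    (hpr : ∀ i, p i ≤ r i) : ∃ p' : ℤ → ℝ, DP d w p' ∧ (∀ i, p i ≤ p' i) ∧ (∀ i, p' i ≤ r i) ∧
      ∀ x ∈ Kc w r, ∀ i, NN w i x ≤ p' i := by
  have hne : (Kc w r).Nonempty := ⟨_, Kc_mono hpr (hp.X_mem hw 0)⟩
  have hmax : ∀ i, ∃ a ∈ Kc w r, ∀ x ∈ Kc w r, NN w i x ≤ NN w i a := fun i =>
    (hw.Kc_compact r).exists_isMaxOn hne (NN_cont w i).continuousOn
  choose a ha hmax using hmax
  have hle : ∀ i, p i ≤ NN w i (a i) := fun i => by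
    have := hmax i _ (Kc_mono hpr (hp.X_mem hw i))
    rwa [hw.NN_X] at this
  refine ⟨fun i => NN w i (a i), ⟨fun i => ?_, ?_, fun i j => ?_⟩, hle, fun i => ha i i,
    fun x hx i => hmax i x hx⟩
  · apply le_antisymm
    · have := hmax i _ (ha (i + 2 * d))
      simpa only [hw.NN_per] using this
    · have := hmax (i + 2 * d) _ (ha i)
      simpa only [hw.NN_per] using this
  · obtain ⟨x, hx⟩ := hp.ne
    exact ⟨x, fun i => (hx i).trans_le (hle i)⟩
  · set p' : ℤ → ℝ := fun i => NN w i (a i) with hp'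
    have hc := hw.pos1 i
    obtain ⟨α, hα⟩ := hw.par i (XX w p' i) (a i) (by rw [hw.NN_X])
    obtain ⟨β, hβ⟩ := hw.par (i+1) (XX w p' i) (a (i+1)) (by rw [hw.NN_X1])
    have hα0 : 0 ≤ α := by
      have h1 := hw.NN_X1 p' i
      rw [hα, NN_line, NN_w] at h1
      have h2 : NN w (i+1) (a i) ≤ p' (i+1) := hmax _ _ (ha i)
      by_contra h; push Not at h
      nlinarith
    have hβ0 : β ≤ 0 := by
      have h1 := hw.NN_X p' i
      rw [hβ, NN_line, NN_w, cross_anti] at h1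
      have h2 : NN w i (a (i+1)) ≤ p' i := hmax _ _ (ha (i+1))
      by_contra h; push Not at h
      nlinarith
    have hj1 : NN w j (a i) ≤ p' j := hmax j _ (ha i)
    have hj2 : NN w j (a (i+1)) ≤ p' j := hmax j _ (ha (i+1))
    rcases hw.adj_sign i j with h | h
    · rw [hα, NN_line]; nlinarith
    · rw [hβ, NN_line]; nlinarith

/-- if the only separators are `≡ m` with equality then the polygons touch along edge `m`. -/
theorem touch_of_sep {p q : ℤ → ℝ} (hp : DP d w p) (hq : DP d w q) {m : ℤ} (hm : Nd w p m)
    (h0 : p m + q (m + d) = 0) (h1 : 0 < p (m+1) + q (m + 1 + d))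
    (h2 : 0 < p (m-1) + q (m - 1 + d)) : ∃ x ∈ RR d w p m, x ∈ Kc w q := by
  obtain ⟨t, ht0, ht⟩ := hp.edge hw m
  have ht0 : 0 < t := by
    refine lt_of_le_of_ne ht0 ?_
    rintro rfl
    apply hm; rw [ht]; simp
  obtain ⟨t', ht'0, ht'⟩ := hq.edge hw (m + d)
  have hNm : ∀ x, NN w (m + d) x = q (m + d) → NN w m x = NN w m (XX w p (m-1)) := by
    intro x hx
    rw [hw.NN_d] at hx
    rw [hw.NN_X1']; linarith
  obtain ⟨b, hb⟩ := hw.par m (XX w q (m + d)) (XX w p (m-1)) (hNm _ (hw.NN_X _ _))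
  obtain ⟨a, ha⟩ := hw.par m (XX w q (m + d - 1)) (XX w p (m-1)) (hNm _ (hw.NN_X1' _ _))
  have hc := hw.pos1 m
  have hc' := hw.pos1' m
  have hbt : b < t := by
    have e1 := hw.NN_X1 q (m + d)
    rw [show m + (d:ℤ) + 1 = m + 1 + d by ring, hw.NN_d, hb, NN_line, NN_w] at e1
    have e2 := hw.NN_X1 p m
    rw [ht, NN_line, NN_w] at e2
    by_contra h; push Not at h
    nlinarith
  have ha0 : 0 < a := by
    have e1 := hw.NN_X q (m + d - 1)
    rw [show m + (d:ℤ) - 1 = m - 1 + d by ring, hw.NN_d,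
      show m - 1 + (d:ℤ) = m + d - 1 by ring, ha, NN_line, NN_w, cross_anti,
      show m + (d:ℤ) - 1 = m - 1 + d by ring] at e1
    have e2 := hw.NN_X p (m-1)
    by_contra h; push Not at h
    nlinarith
  have hba : b ≤ a := by
    rw [hb, ha, hw.neg] at ht'
    have e : NN w (m+1) (XX w p (m-1) + b • w m) =
      NN w (m+1) (XX w p (m-1) + a • w m + t' • -w m) := by rw [← ht']
    rw [NN_line, NN_add, NN_line, smul_neg, ← neg_smul, NN_smul, NN_w] at e
    by_contra h; push Not at h
    nlinarith
  have key : ∀ s, b ≤ s → s ≤ a → XX w p (m-1) + s • w m ∈ Kc w q := by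
    intro s hs1 hs2 j
    have e1 := hq.tight (m + d) j
    have e2 := hq.tight (m + d - 1) j
    rw [hb, NN_line] at e1
    rw [ha, NN_line] at e2
    rw [NN_line]
    rcases le_total 0 (NN w j (w m)) with h | h <;> nlinarith
  rcases lt_or_ge 0 b with h | h
  · exact ⟨_, hp.mem_R_of hw m ht h hbt, key b le_rfl hba⟩
  · refine ⟨_, hp.mem_R_of hw m ht (s := min a (t/2)) (lt_min ha0 (by linarith))
      (lt_of_le_of_lt (min_le_right _ _) (by linarith)), key _ ?_ (min_le_left _ _)⟩
    exact le_min hba (by linarith)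

end Good

/-- naive push of one edge -/
theorem push1 {d : ℕ} {w : ℤ → Pt} (hw : Good d w) {p : ℤ → ℝ} (hp : DP d w p) (m : ℤ)
    (hm : Nd w p m) (Q : Set (ℤ → ℝ)) (hQf : Q.Finite)
    (hQ : ∀ q ∈ Q, DP d w q ∧ SepD d p q ∧ ∀ x ∈ RR d w p m, x ∉ Kc w q)
    (Cn : Set (ℤ × ℝ)) (hCf : Cn.Finite)
    (hC : ∀ ch ∈ Cn, p ch.1 ≤ ch.2 ∧ ((2 * (d : ℤ)) ∣ (ch.1 - m) → p ch.1 < ch.2))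
    (c : ℝ) (hc : p m < c) :
    ∃ p' : ℤ → ℝ, DP d w p' ∧ (∀ i, p i ≤ p' i) ∧ p m < p' m ∧ p' m ≤ c ∧
      (∀ i, ¬ (2 * (d : ℤ)) ∣ (i - m) → p' i = p i) ∧ (∀ q ∈ Q, SepD d p' q) ∧
      ∀ ch ∈ Cn, p' ch.1 ≤ ch.2 := by
  let r : ℝ → ℤ → ℝ := fun δ i => if (2 * (d : ℤ)) ∣ (i - m) then p i + δ else p i
  have hr1 : ∀ δ i, (2 * (d : ℤ)) ∣ (i - m) → r δ i = p i + δ := fun δ i h => if_pos h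
  have hr2 : ∀ δ i, ¬ (2 * (d : ℤ)) ∣ (i - m) → r δ i = p i := fun δ i h => if_neg h
  have hrper : ∀ δ i, r δ (i + 2 * (d : ℤ)) = r δ i := by
    intro δ i
    have : (2 * (d : ℤ)) ∣ (i + 2 * d - m) ↔ (2 * (d : ℤ)) ∣ (i - m) := by
      rw [show i + 2 * (d:ℤ) - m = (i - m) + 2 * d by ring]
      exact dvd_add_self_right
    simp only [r, this, hp.per]
  have ev1 : ∀ᶠ δ in nhdsWithin (0:ℝ) (Set.Ioi 0), δ ≤ c - p m := by
    filter_upwards [Ioc_mem_nhdsGT (show (0:ℝ) < c - p m by linarith)] with δ hδ using hδ.2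
  have ev2 : ∀ᶠ δ in nhdsWithin (0:ℝ) (Set.Ioi 0), ∀ q ∈ Q, SepD d (r δ) q := by
    rw [Filter.eventually_all_finite hQf]
    intro q hq
    obtain ⟨hqD, hs, hno⟩ := hQ q hq
    by_cases h : ∃ i, ¬ (2 * (d : ℤ)) ∣ (i - m) ∧ p i + q (i + d) ≤ 0
    · obtain ⟨i, h1, h2⟩ := h
      exact Filter.Eventually.of_forall fun δ => ⟨i, by rw [hr2 δ i h1]; exact h2⟩
    · push Not at h
      have hd := hw.hd
      have h1 := h (m+1) (by
        rw [show m + 1 - m = 1 by ring]; exact hw.not_dvd_of_lt _ (by omega) (by omega))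
      have h2 := h (m-1) (by
        rw [show m - 1 - m = -1 by ring]; exact hw.not_dvd_of_lt' _ (by omega) (by omega))
      obtain ⟨i, hi⟩ := hs
      by_cases him : (2 * (d : ℤ)) ∣ (i - m)
      · have e1 := per_dvd hp.per him
        have e2 : q (i + d) = q (m + d) := per_dvd hqD.per (by simpa using him)
        rw [e1, e2] at hi
        rcases hi.lt_or_eq with h3 | h3
        · filter_upwards [Ioc_mem_nhdsGT (show (0:ℝ) < -(p m + q (m + d)) by linarith)] with δ hδ
          refine ⟨m, ?_⟩
          rw [hr1 δ m (by simp)]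
          linarith [hδ.2]
        · obtain ⟨x, hx1, hx2⟩ := hw.touch_of_sep hp hqD hm h3 h1 h2
          exact absurd hx2 (hno x hx1)
      · exact absurd hi (not_le.2 (h i him))
  have ev3 : ∀ᶠ δ in nhdsWithin (0:ℝ) (Set.Ioi 0), ∀ ch ∈ Cn, r δ ch.1 ≤ ch.2 := by
    rw [Filter.eventually_all_finite hCf]
    intro ch hch
    by_cases h : (2 * (d : ℤ)) ∣ (ch.1 - m)
    · have := (hC ch hch).2 h
      filter_upwards [Ioc_mem_nhdsGT (show (0:ℝ) < ch.2 - p ch.1 by linarith)] with δ hδ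
      rw [hr1 δ _ h]; linarith [hδ.2]
    · exact Filter.Eventually.of_forall fun δ => by rw [hr2 δ _ h]; exact (hC ch hch).1
  obtain ⟨δ, ⟨⟨h1, h2⟩, h3⟩, h4⟩ := (((ev1.and ev2).and ev3).and self_mem_nhdsWithin).exists
  replace h4 : 0 < δ := h4
  have hpr : ∀ i, p i ≤ r δ i := by
    intro i
    by_cases h : (2 * (d : ℤ)) ∣ (i - m)
    · rw [hr1 δ i h]; linarith
    · rw [hr2 δ i h]
  obtain ⟨p', hp', hle, hle', hx⟩ := hw.tighten hp (hrper δ) hpr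
  refine ⟨p', hp', hle, ?_, ?_, ?_, ?_, ?_⟩
  · obtain ⟨z, hz⟩ := hp.R_nonempty hw m hm
    have hcp := hw.pos1 m
    have ev : ∀ᶠ ε in nhdsWithin (0:ℝ) (Set.Ioi 0), ∀ j ∈ Finset.Ico m (m + 2 * (d:ℤ)),
        NN w j (z + (-ε) • w (m+1)) ≤ r δ j := by
      rw [Filter.eventually_all_finset]
      intro j _
      have hcont : Continuous fun ε : ℝ => NN w j (z + (-ε) • w (m+1)) := by
        simp only [NN_line]; fun_prop
      have hlt : NN w j (z + (-(0:ℝ)) • w (m+1)) < r δ j := by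
        rw [neg_zero, zero_smul, add_zero]
        by_cases h : (2 * (d : ℤ)) ∣ (j - m)
        · rw [hr1 δ j h, hw.NN_congr h, hz.1, per_dvd hp.per h]; linarith
        · rw [hr2 δ j h]; exact hz.2 j h
      have := hcont.continuousAt.eventually_lt (x₀ := (0:ℝ)) continuousAt_const hlt
      exact (this.filter_mono nhdsWithin_le_nhds).mono fun _ h => h.le
    obtain ⟨ε, hε, hε0⟩ := (ev.and self_mem_nhdsWithin).exists
    replace hε0 : 0 < ε := hε0
    have hmem : z + (-ε) • w (m+1) ∈ Kc w (r δ) := by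
      intro j
      obtain ⟨j', h1, h2, h3⟩ := hw.red2 m j
      rw [hw.NN_congr h3, per_dvd (hrper δ) h3]
      exact hε j' (Finset.mem_Ico.2 ⟨h1, h2⟩)
    have := hx _ hmem m
    rw [NN_line, NN_w, cross_anti, hz.1] at this
    nlinarith
  · have := hle' m
    rw [hr1 δ m (by simp)] at this
    linarith
  · intro i hi
    have := hle' i
    rw [hr2 δ i hi] at this
    exact le_antisymm this (hle i)
  · intro q hq
    exact (h2 q hq).mono hle' (fun _ => le_rfl)
  · intro ch hch
    exact (hle' _).trans (h3 ch hch)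


/-- the edge `i` of `p` is blocked -/
def Blocked (d : ℕ) (w : ℤ → Pt) (Q : Set (ℤ → ℝ)) (Cn : Set (ℤ × ℝ)) (p : ℤ → ℝ) (i : ℤ) :
    Prop :=
  (∃ q ∈ Q, ∃ x ∈ RR d w p i, x ∈ Kc w q) ∨ (∃ ch ∈ Cn, (2 * (d : ℤ)) ∣ (ch.1 - i) ∧ p ch.1 = ch.2)

/-- blocked by a nondegenerate edge or a side constraint -/
def SBlocked (d : ℕ) (w : ℤ → Pt) (Q : Set (ℤ → ℝ)) (Cn : Set (ℤ × ℝ)) (p : ℤ → ℝ) (i : ℤ) :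
    Prop :=
  (∃ q ∈ Q, Nd w q (i + d) ∧ p i + q (i + d) = 0) ∨
    (∃ ch ∈ Cn, (2 * (d : ℤ)) ∣ (ch.1 - i) ∧ p ch.1 = ch.2)

/-- valid polygon -/
structure Val (d : ℕ) (w : ℤ → Pt) (Q : Set (ℤ → ℝ)) (Cn : Set (ℤ × ℝ)) (p : ℤ → ℝ) : Prop where
  dp : DP d w p
  sep : ∀ q ∈ Q, SepD d p q
  cn : ∀ ch ∈ Cn, p ch.1 ≤ ch.2

theorem XX_cont (w : ℤ → Pt) (i j : ℤ) : Continuous fun s : ℤ → ℝ => NN w j (XX w s i) := by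
  unfold NN XX cross2; fun_prop

theorem RR_mono {d : ℕ} {w : ℤ → Pt} {p s : ℤ → ℝ} (h : ∀ i, p i ≤ s i) {i : ℤ}
    (hi : s i = p i) : RR d w p i ⊆ RR d w s i :=
  fun _ hx => ⟨hx.1.trans hi.symm, fun j hj => (hx.2 j hj).trans_le (h j)⟩

theorem Blocked.mono {d : ℕ} {w : ℤ → Pt} {Q : Set (ℤ → ℝ)} {Cn : Set (ℤ × ℝ)} {p s : ℤ → ℝ}
    (hp : ∀ i, p (i + 2 * (d : ℤ)) = p i) (hs : ∀ i, s (i + 2 * (d : ℤ)) = s i)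
    (h : ∀ i, p i ≤ s i) {i : ℤ} (hi : s i = p i) (hb : Blocked d w Q Cn p i) :
    Blocked d w Q Cn s i := by
  rcases hb with ⟨q, hq, x, hx, hxq⟩ | ⟨ch, hch, h1, h2⟩
  · exact Or.inl ⟨q, hq, x, RR_mono h hi hx, hxq⟩
  · refine Or.inr ⟨ch, hch, h1, ?_⟩
    rw [← h2, per_dvd hs h1, per_dvd hp h1, hi]

theorem Blocked.congr {d : ℕ} {w : ℤ → Pt} (hw : Good d w) {Q : Set (ℤ → ℝ)} {Cn : Set (ℤ × ℝ)}
    {p : ℤ → ℝ} (hp : ∀ i, p (i + 2 * (d : ℤ)) = p i) {i j : ℤ} (hij : (2 * (d : ℤ)) ∣ (i - j))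
    (hb : Blocked d w Q Cn p j) : Blocked d w Q Cn p i := by
  rcases hb with ⟨q, hq, x, hx, hxq⟩ | ⟨ch, hch, h1, h2⟩
  · exact Or.inl ⟨q, hq, x, by rwa [hw.R_congr hp hij], hxq⟩
  · refine Or.inr ⟨ch, hch, ?_, h2⟩
    have := dvd_sub h1 hij
    rwa [show ch.1 - j - (i - j) = ch.1 - i by ring] at this

section
variable {d : ℕ} {w : ℤ → Pt} (hw : Good d w) {Q : Set (ℤ → ℝ)} (hQf : Q.Finite)
  (hQ : ∀ q ∈ Q, DP d w q) {Cn : Set (ℤ × ℝ)} (hCf : Cn.Finite) {B : ℤ → ℝ}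
  (hB : ∀ p, Val d w Q Cn p → ∀ i, p i ≤ B i)
include hw hQf hQ hCf hB

theorem step_max {p : ℤ → ℝ} (hp : Val d w Q Cn p) {k : ℤ} {U : ℤ → Prop}
    (hU : ∀ i, U (i + 2 * (d : ℤ)) = U i) {c : ℝ} (hc : p k < c) :
    ∃ s : ℤ → ℝ, Val d w Q Cn s ∧ (∀ i, p i ≤ s i) ∧ s k ≤ c ∧ (∀ i, ¬ U i → s i = p i) ∧
      ∀ m, U m → Nd w s m → Blocked d w Q Cn s m ∨ ((2 * (d : ℤ)) ∣ (m - k) ∧ s k = c) := by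
  let J := Finset.Ico (0:ℤ) (0 + 2 * (d : ℤ))
  let 𝓜 : Set (ℤ → ℝ) := {s | (∀ i, s (i + 2 * (d : ℤ)) = s i) ∧
    (∀ i j, NN w j (XX w s i) ≤ s j) ∧ (∀ i, p i ≤ s i) ∧ (∀ i, s i ≤ B i) ∧
    (∀ i, ¬ U i → s i = p i) ∧
    (∀ q ∈ Q, ∃ i ∈ J, s i + q (i + (d : ℤ)) ≤ 0) ∧ (∀ ch ∈ Cn, s ch.1 ≤ ch.2) ∧ s k ≤ c}
  have hsepJ : ∀ s : ℤ → ℝ, (∀ i, s (i + 2 * (d : ℤ)) = s i) → ∀ q ∈ Q, SepD d s q →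
      ∃ i ∈ J, s i + q (i + (d : ℤ)) ≤ 0 := by
    rintro s hs q hq ⟨i, hi⟩
    obtain ⟨j, h1, h2, h3⟩ := hw.red2 0 i
    refine ⟨j, Finset.mem_Ico.2 ⟨h1, h2⟩, ?_⟩
    rw [← per_dvd hs h3]
    have : q (i + d) = q (j + d) := per_dvd (hQ q hq).per (by simpa using h3)
    rwa [← this]
  have hcl : IsClosed 𝓜 := by
    have hc1 : ∀ i : ℤ, Continuous fun s : ℤ → ℝ => s i := fun i => continuous_apply i
    have e : 𝓜 = (⋂ i, {s | s (i + 2 * (d : ℤ)) = s i}) ∩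
      (⋂ i, ⋂ j, {s | NN w j (XX w s i) ≤ s j}) ∩ (⋂ i, {s | p i ≤ s i}) ∩ (⋂ i, {s | s i ≤ B i}) ∩
      (⋂ i, ⋂ (_ : ¬ U i), {s | s i = p i}) ∩
      (⋂ q ∈ Q, ⋃ i ∈ J, {s | s i + q (i + (d : ℤ)) ≤ 0}) ∩ (⋂ ch ∈ Cn, {s | s ch.1 ≤ ch.2}) ∩
      {s | s k ≤ c} := by
      ext s
      simp only [𝓜, Set.mem_setOf_eq, Set.mem_inter_iff, Set.mem_iInter, Set.mem_iUnion,
        exists_prop, and_assoc]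
    rw [e]
    refine ((((((IsClosed.inter ?_ ?_).inter ?_).inter ?_).inter ?_).inter ?_).inter ?_).inter ?_
    · exact isClosed_iInter fun i => isClosed_eq (hc1 _) (hc1 _)
    · exact isClosed_iInter fun i => isClosed_iInter fun j => isClosed_le (XX_cont w i j) (hc1 _)
    · exact isClosed_iInter fun i => isClosed_le continuous_const (hc1 _)
    · exact isClosed_iInter fun i => isClosed_le (hc1 _) continuous_const
    · exact isClosed_iInter fun i => isClosed_iInter fun _ => isClosed_eq (hc1 _) continuous_const
    · refine isClosed_iInter fun q => isClosed_iInter fun _ => ?_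
      refine Set.Finite.isClosed_biUnion J.finite_toSet fun i _ => ?_
      exact isClosed_le ((hc1 _).add continuous_const) continuous_const
    · exact isClosed_iInter fun i => isClosed_iInter fun _ => isClosed_le (hc1 _) continuous_const
    · exact isClosed_le (hc1 _) continuous_const
  have hcomp : IsCompact 𝓜 := by
    refine (isCompact_univ_pi (fun i => isCompact_Icc (a := p i) (b := B i))).of_isClosed_subset
      hcl ?_
    intro s hs i _
    exact ⟨hs.2.2.1 i, hs.2.2.2.1 i⟩
  have hpM : p ∈ 𝓜 := ⟨hp.dp.per, hp.dp.tight, fun _ => le_rfl, hB p hp, fun _ _ => rfl,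
    fun q hq => hsepJ p hp.dp.per q hq (hp.sep q hq), hp.cn, hc.le⟩
  obtain ⟨s, hsM, hmax⟩ := hcomp.exists_isMaxOn ⟨p, hpM⟩
    (f := fun s : ℤ → ℝ => ∑ i ∈ J, s i)
    (continuous_finset_sum _ fun i _ => continuous_apply i).continuousOn
  obtain ⟨s1, s2, s3, s4, s5, s6, s7, s8⟩ := hsM
  have hsD : DP d w s := ⟨s1, by
    obtain ⟨x, hx⟩ := hp.dp.ne
    exact ⟨x, fun i => (hx i).trans_le (s3 i)⟩, s2⟩
  have hsV : Val d w Q Cn s := ⟨hsD, fun q hq => by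
    obtain ⟨i, -, hi⟩ := s6 q hq
    exact ⟨i, hi⟩, s7⟩
  refine ⟨s, hsV, s3, s8, s5, ?_⟩
  intro m hUm hNm
  by_contra hcon
  push Not at hcon
  obtain ⟨hnb, hnk⟩ := hcon
  unfold Blocked at hnb
  push Not at hnb
  obtain ⟨hnb1, hnb2⟩ := hnb
  let c' := if (2 * (d : ℤ)) ∣ (m - k) then c else s m + 1
  have hc' : s m < c' := by
    by_cases h : (2 * (d : ℤ)) ∣ (m - k)
    · simp only [c', if_pos h]
      rw [per_dvd s1 h]
      exact lt_of_le_of_ne s8 (hnk h)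
    · simp only [c', if_neg h]; linarith
  obtain ⟨t, ht, hst, hm, hmc, hfix, htsep, htc⟩ := push1 hw hsD m hNm Q hQf
    (fun q hq => ⟨hQ q hq, hsV.sep q hq, hnb1 q hq⟩) Cn hCf
    (fun ch hch => ⟨s7 ch hch, fun hdv => lt_of_le_of_ne (s7 ch hch) (hnb2 ch hch hdv)⟩) c' hc'
  have htV : Val d w Q Cn t := ⟨ht, htsep, htc⟩
  have htM : t ∈ 𝓜 := by
    refine ⟨ht.per, ht.tight, fun i => (s3 i).trans (hst i), hB t htV, ?_,
      fun q hq => hsepJ t ht.per q hq (htsep q hq), htc, ?_⟩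
    · intro i hi
      rw [hfix i, s5 i hi]
      intro hdv
      rw [per_dvd hU hdv] at hi
      exact hi hUm
    · by_cases h : (2 * (d : ℤ)) ∣ (m - k)
      · rw [← per_dvd ht.per h]
        simpa only [c', if_pos h] using hmc
      · rw [hfix k (by rwa [← dvd_neg, neg_sub])]
        exact s8
  have h1 : ∑ i ∈ J, t i ≤ ∑ i ∈ J, s i := hmax htM
  obtain ⟨j, j1, j2, j3⟩ := hw.red2 0 m
  have h2 : ∑ i ∈ J, s i < ∑ i ∈ J, t i := by
    refine Finset.sum_lt_sum (fun i _ => hst i) ⟨j, Finset.mem_Ico.2 ⟨j1, j2⟩, ?_⟩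
    rw [← per_dvd s1 j3, ← per_dvd ht.per j3]
    exact hm
  linarith

theorem step {p : ℤ → ℝ} (hp : Val d w Q Cn p) {k : ℤ} {A : ℤ → Prop}
    (hA : ∀ i, A (i + 2 * (d : ℤ)) = A i)
    (hnb : ¬ Blocked d w Q Cn p k) {c : ℝ} (hc : p k < c)
    (hE : ∀ q ∈ Q, ∀ i, p k < NN w k (XX w q i) → c ≤ NN w k (XX w q i)) :
    ∃ s : ℤ → ℝ, Val d w Q Cn s ∧ (∀ i, p i ≤ s i) ∧ s k ≤ c ∧
      (∀ i, ¬ ((2 * (d : ℤ)) ∣ (i - k) ∨ (A i ∧ ¬ Nd w p i)) → s i = p i) ∧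
      (∀ m, ((2 * (d : ℤ)) ∣ (m - k) ∨ (A m ∧ ¬ Nd w p m)) → Nd w s m →
        Blocked d w Q Cn s m ∨ ((2 * (d : ℤ)) ∣ (m - k) ∧ s k = c)) ∧
      (∀ m, ¬ (2 * (d : ℤ)) ∣ (m - k) → A m → ¬ Nd w p m → Nd w s m →
        ¬ (2 * (d : ℤ)) ∣ (m - (k + d)) ∧ SBlocked d w Q Cn s m) := by
  have hd := hw.hd
  let U : ℤ → Prop := fun i => (2 * (d : ℤ)) ∣ (i - k) ∨ (A i ∧ ¬ Nd w p i)
  have hU : ∀ i, U (i + 2 * (d : ℤ)) = U i := by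
    intro i
    have : (2 * (d : ℤ)) ∣ (i + 2 * d - k) ↔ (2 * (d : ℤ)) ∣ (i - k) := by
      rw [show i + 2 * (d:ℤ) - k = (i - k) + 2 * d by ring]
      exact dvd_add_self_right
    simp only [U, this, hA, hw.Nd_per hp.dp.per]
  obtain ⟨s, hs, hps, hsc, hfix, hblk⟩ := step_max hw hQf hQ hCf hB hp hU hc
  refine ⟨s, hs, hps, hsc, hfix, hblk, ?_⟩
  intro m hmk hAm hnm hNm
  have hmkd : ¬ (2 * (d : ℤ)) ∣ (m - (k + d)) := by
    intro hdv
    obtain ⟨a, b, a1, a2, b1, b2, -, ha, hb, α, β, hα, hβ, hx, hpm⟩ := hp.dp.nbrs' hw m hnm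
    have ea : s a = p a := by
      apply hfix
      rintro (h | h)
      · have h3 := dvd_sub hdv h
        rw [show m - (k + d) - (a - k) = m - a - d by ring] at h3
        exact hw.not_dvd_of_lt' _ (by omega) (by omega) h3
      · exact h.2 ha
    have eb : s b = p b := by
      apply hfix
      rintro (h | h)
      · have h3 := dvd_sub h hdv
        rw [show (b - k) - (m - (k + d)) = b - m + d by ring] at h3
        exact hw.not_dvd_of_lt _ (by omega) (by omega) h3
      · exact h.2 hb
    obtain ⟨z, hz⟩ := hs.dp.R_nonempty hw m hNm
    have z1 := hz.2 a (hw.not_dvd_of_lt' _ (by omega) (by omega))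
    have z2 := hz.2 b (hw.not_dvd_of_lt _ (by omega) (by omega))
    have z3 := hz.1
    rw [hx] at z3
    rw [ea] at z1
    rw [eb] at z2
    have := hps m
    nlinarith
  refine ⟨hmkd, ?_⟩
  rcases hblk m (Or.inr ⟨hAm, hnm⟩) hNm with hb | hb
  swap
  · exact absurd hb.1 hmk
  rcases hb with ⟨q, hq, y, hy, hyq⟩ | hb
  swap
  · exact Or.inr hb
  have hqD := hQ q hq
  have h0 := hw.sep_touch hs.dp.per hqD.per (hs.sep q hq) hy hyq
  refine Or.inl ⟨q, hq, ?_, h0⟩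
  by_contra hnq
  have hyX : y = XX w q (m + d) := hqD.eq_X_of_not_Nd hw (m + d) hnq hyq (by
    rw [hw.NN_d, hy.1]; linarith)
  have hstrict : ∀ j, Nd w p j → ¬ (2 * (d : ℤ)) ∣ (j - k) → NN w j y < p j := by
    intro j hj hjk
    rw [← hfix j (by rintro (h | h); exacts [hjk h, h.2 hj])]
    apply hy.2
    intro hdv
    apply hnm
    have := per_dvd (fun i => hw.Nd_per hp.dp.per i) hdv
    rwa [this] at hj
  have hk : p k ≤ NN w k y := by
    by_contra hlt
    push Not at hlt
    have hst : ∀ j, Nd w p j → NN w j y < p j := by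
      intro j hj
      by_cases h : (2 * (d : ℤ)) ∣ (j - k)
      · rw [hw.NN_congr h, per_dvd hp.dp.per h]; exact hlt
      · exact hstrict j hj h
    refine hw.sep_disj (hp.sep q hq) (x := y) (fun j => ?_) hyq
    by_cases hj : Nd w p j
    · exact hst j hj
    · obtain ⟨a, b, -, -, -, -, -, ha, hb, α, β, hα, hβ, hx, hpj⟩ := hp.dp.nbrs' hw j hj
      rw [hx, hpj]
      have := hst a ha
      have := hst b hb
      nlinarith
  have hk2 : NN w k y < s k := hy.2 k (by rwa [← dvd_neg, neg_sub])
  have hk3 : NN w k y = p k := by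
    rcases hk.lt_or_eq with h | h
    · rw [hyX] at h
      have := hE q hq _ h
      rw [← hyX] at this
      linarith
    · exact h.symm
  apply hnb
  refine Or.inl ⟨q, hq, y, ⟨hk3, fun j hjk => ?_⟩, hyq⟩
  by_cases hj : Nd w p j
  · exact hstrict j hj hjk
  · obtain ⟨a, b, a1, a2, b1, b2, ab, ha, hb, α, β, hα, hβ, hx, hpj⟩ := hp.dp.nbrs' hw j hj
    rw [hx, hpj]
    have hle : ∀ i, Nd w p i → NN w i y ≤ p i := by
      intro i hi
      by_cases h : (2 * (d : ℤ)) ∣ (i - k)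
      · rw [hw.NN_congr h, per_dvd hp.dp.per h, hk3]
      · exact (hstrict i hi h).le
    by_cases h : (2 * (d : ℤ)) ∣ (a - k)
    · have hb' : ¬ (2 * (d : ℤ)) ∣ (b - k) := by
        intro h2
        have h3 := dvd_sub h2 h
        rw [show b - k - (a - k) = b - a by ring] at h3
        exact hw.not_dvd_of_lt _ (by omega) (by omega) h3
      have := hle a ha
      have := hstrict b hb hb'
      nlinarith
    · have := hle b hb
      have := hstrict a ha h
      nlinarith

theorem push_aux {k : ℤ} {A : ℤ → Prop} (hA : ∀ i, A (i + 2 * (d : ℤ)) = A i) (hAk : ¬ A k)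
    {G : ℤ → ℝ → Prop}
    (hG1 : ∀ q ∈ Q, ∀ i, ¬ (2 * (d : ℤ)) ∣ (i - k) → ¬ (2 * (d : ℤ)) ∣ (i - (k + d)) →
      Nd w q (i + d) → G i (-q (i + d)))
    (hG2 : ∀ ch ∈ Cn, ∀ i, (2 * (d : ℤ)) ∣ (ch.1 - i) → G i ch.2) (E : Finset ℝ)
    (hEE : ∀ q ∈ Q, ∀ i, NN w k (XX w q i) ∈ E)
    (p : ℤ → ℝ) (hp : Val d w Q Cn p)
    (hbl : ∀ i, A i → Nd w p i → Blocked d w Q Cn p i)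
    (hG : ∀ i, ¬ (2 * (d : ℤ)) ∣ (i - k) → (Nd w p i ∨ ¬ A i) → G i (p i))
    (rec : ∀ s : ℤ → ℝ, Val d w Q Cn s →
      (E.filter (fun e => s k < e)).card < (E.filter (fun e => p k < e)).card →
      (∀ i, A i → Nd w s i → Blocked d w Q Cn s i) →
      (∀ i, ¬ (2 * (d : ℤ)) ∣ (i - k) → (Nd w s i ∨ ¬ A i) → G i (s i)) →
      p k < s k →
      ∃ t : ℤ → ℝ, Val d w Q Cn t ∧ (∀ i, s i ≤ t i) ∧
        (∀ i, ¬ A i → ¬ (2 * (d : ℤ)) ∣ (i - k) → t i = s i) ∧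
        (∀ i, (A i ∨ (2 * (d : ℤ)) ∣ (i - k)) → Nd w t i → Blocked d w Q Cn t i) ∧
        (∀ i, ¬ (2 * (d : ℤ)) ∣ (i - k) → (Nd w t i ∨ ¬ A i) → G i (t i))) :
      ∃ s : ℤ → ℝ, Val d w Q Cn s ∧ (∀ i, p i ≤ s i) ∧
        (∀ i, ¬ A i → ¬ (2 * (d : ℤ)) ∣ (i - k) → s i = p i) ∧
        (∀ i, (A i ∨ (2 * (d : ℤ)) ∣ (i - k)) → Nd w s i → Blocked d w Q Cn s i) ∧
        (∀ i, ¬ (2 * (d : ℤ)) ∣ (i - k) → (Nd w s i ∨ ¬ A i) → G i (s i)) := by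
  by_cases hk : Blocked d w Q Cn p k ∨ ¬ Nd w p k
  · refine ⟨p, hp, fun _ => le_rfl, fun _ _ _ => rfl, ?_, hG⟩
    rintro i (hi | hi) hn
    · exact hbl i hi hn
    · rcases hk with hk | hk
      · exact Blocked.congr hw hp.dp.per hi hk
      · exact absurd (per_dvd (fun i => hw.Nd_per hp.dp.per i) hi ▸ hn) hk
  push Not at hk
  obtain ⟨hnb, -⟩ := hk
  set F := E.filter (fun e => p k < e) with hF
  have hcex : ∃ c, p k < c ∧ (∀ e ∈ E, p k < e → c ≤ e) ∧ (c ∈ F ∨ B k < c) := by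
    by_cases hne : F.Nonempty
    · refine ⟨F.min' hne, ?_, ?_, Or.inl (F.min'_mem hne)⟩
      · exact (Finset.mem_filter.1 (F.min'_mem hne)).2
      · intro e he hpe
        exact F.min'_le e (Finset.mem_filter.2 ⟨he, hpe⟩)
    · refine ⟨max (p k) (B k) + 1, ?_, ?_, Or.inr ?_⟩
      · have := le_max_left (p k) (B k); linarith
      · intro e he hpe
        exact absurd ⟨e, Finset.mem_filter.2 ⟨he, hpe⟩⟩ hne
      · have := le_max_right (p k) (B k); linarith
  obtain ⟨c, hc, hcE, hcF⟩ := hcex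
  obtain ⟨s, hs, hps, hsc, hfix, hblk, hsb⟩ := step hw hQf hQ hCf hB hp hA hnb hc
    (fun q hq i h => hcE _ (hEE q hq i) h)
  have hcong : ∀ i, (2 * (d : ℤ)) ∣ (i - k) → ¬ A i := fun i hi => by
    rw [per_dvd hA hi]; exact hAk
  have h1 : ∀ i, ¬ A i → ¬ (2 * (d : ℤ)) ∣ (i - k) → s i = p i := by
    intro i hi hik
    apply hfix
    rintro (h | h)
    exacts [hik h, hi h.1]
  have h2 : ∀ i, A i → Nd w s i → Blocked d w Q Cn s i := by
    intro i hi hn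
    have hik : ¬ (2 * (d : ℤ)) ∣ (i - k) := fun h => hcong i h hi
    by_cases hpn : Nd w p i
    · have e : s i = p i := hfix i (by rintro (h | h); exacts [hik h, h.2 hpn])
      exact (hbl i hi hpn).mono hp.dp.per hs.dp.per hps e
    · rcases hblk i (Or.inr ⟨hi, hpn⟩) hn with h | h
      · exact h
      · exact absurd h.1 hik
  have h3 : ∀ i, ¬ (2 * (d : ℤ)) ∣ (i - k) → (Nd w s i ∨ ¬ A i) → G i (s i) := by
    intro i hik h
    by_cases hi : A i
    · have hn : Nd w s i := by tauto
      by_cases hpn : Nd w p i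
      · have e : s i = p i := hfix i (by rintro (h | h); exacts [hik h, h.2 hpn])
        rw [e]; exact hG i hik (Or.inl hpn)
      · obtain ⟨g1, g2⟩ := hsb i hik hi hpn hn
        rcases g2 with ⟨q, hq, hqn, hq0⟩ | ⟨ch, hch, g3, g4⟩
        · have := hG1 q hq i hik g1 hqn
          rwa [show s i = -q (i + d) by linarith]
        · have := hG2 ch hch i g3
          rwa [← g4, per_dvd hs.dp.per g3] at this
    · rw [h1 i hi hik]; exact hG i hik (Or.inr hi)
  by_cases hsk : s k = c
  · rcases hcF with hcF | hcF
    · have hlt : (E.filter (fun e => s k < e)).card < F.card := by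
        apply Finset.card_lt_card
        rw [Finset.ssubset_iff_of_subset]
        · refine ⟨c, hcF, ?_⟩
          rw [hsk]; simp
        · intro e he
          rw [Finset.mem_filter] at he
          exact Finset.mem_filter.2 ⟨he.1, (hps k).trans_lt he.2⟩
      obtain ⟨t, t1, t2, t3, t4, t5⟩ := rec s hs hlt h2 h3 (by rw [hsk]; exact hc)
      exact ⟨t, t1, fun i => (hps i).trans (t2 i), fun i hi hik => (t3 i hi hik).trans (h1 i hi hik),
        t4, t5⟩
    · have := hB s hs k
      linarith
  · refine ⟨s, hs, hps, h1, ?_, h3⟩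
    rintro i (hi | hi) hn
    · exact h2 i hi hn
    · rcases hblk i (Or.inl hi) hn with h | h
      · exact h
      · exact absurd h.2 hsk

/-- push the edge `k` as far as possible -/
theorem push {k : ℤ} {A : ℤ → Prop} (hA : ∀ i, A (i + 2 * (d : ℤ)) = A i) (hAk : ¬ A k)
    {G : ℤ → ℝ → Prop}
    (hG1 : ∀ q ∈ Q, ∀ i, ¬ (2 * (d : ℤ)) ∣ (i - k) → ¬ (2 * (d : ℤ)) ∣ (i - (k + d)) →
      Nd w q (i + d) → G i (-q (i + d)))
    (hG2 : ∀ ch ∈ Cn, ∀ i, (2 * (d : ℤ)) ∣ (ch.1 - i) → G i ch.2) (E : Finset ℝ)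
    (hEE : ∀ q ∈ Q, ∀ i, NN w k (XX w q i) ∈ E) (n : ℕ) :
    ∀ p : ℤ → ℝ, Val d w Q Cn p → (E.filter (fun e => p k < e)).card ≤ n →
      (∀ i, A i → Nd w p i → Blocked d w Q Cn p i) →
      (∀ i, ¬ (2 * (d : ℤ)) ∣ (i - k) → (Nd w p i ∨ ¬ A i) → G i (p i)) →
      ∃ s : ℤ → ℝ, Val d w Q Cn s ∧ (∀ i, p i ≤ s i) ∧
        (∀ i, ¬ A i → ¬ (2 * (d : ℤ)) ∣ (i - k) → s i = p i) ∧
        (∀ i, (A i ∨ (2 * (d : ℤ)) ∣ (i - k)) → Nd w s i → Blocked d w Q Cn s i) ∧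
        (∀ i, ¬ (2 * (d : ℤ)) ∣ (i - k) → (Nd w s i ∨ ¬ A i) → G i (s i)) := by
  induction n with
  | zero =>
    intro p hp hcard hbl hG
    exact push_aux hw hQf hQ hCf hB hA hAk hG1 hG2 E hEE p hp hbl hG (fun s _ h1 _ _ _ => by
      omega)
  | succ n ih =>
    intro p hp hcard hbl hG
    exact push_aux hw hQf hQ hCf hB hA hAk hG1 hG2 E hEE p hp hbl hG (fun s h1 h2 h3 h4 => by
      obtain ⟨t, t1, t2, t3, t4, t5⟩ := ih s h1 (by omega) h3 h4
      exact fun _ => ⟨t, t1, t2, t3, t4, t5⟩)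
end


/-- abstract level predicate -/
structure LvOK (d : ℕ) (w : ℤ → Pt) (Cn : Set (ℤ × ℝ)) (Lv : ℕ → ℤ → ℝ → Prop) : Prop where
  congr : ∀ M i j x, (2 * (d : ℤ)) ∣ (i - j) → Lv M i x → Lv M j x
  flip : ∀ M i x, Lv M i x → Lv M (i + d) (-x)
  succ : ∀ M i x, 1 ≤ M → Lv M i x → Lv (M + 1) i x
  meet : ∀ M a b x, 1 ≤ M → ¬ (d : ℤ) ∣ (a - b) → Lv M a (NN w a x) → Lv M b (NN w b x) →
    ∀ i, Lv (M + 1) i (NN w i x)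
  cn : ∀ ch ∈ Cn, Lv 1 ch.1 ch.2

theorem LvOK.mono {d : ℕ} {w : ℤ → Pt} {Cn : Set (ℤ × ℝ)} {Lv : ℕ → ℤ → ℝ → Prop}
    (h : LvOK d w Cn Lv) {M M' : ℕ} (h1 : 1 ≤ M) (h2 : M ≤ M') {i : ℤ} {x : ℝ}
    (hx : Lv M i x) : Lv M' i x := by
  induction M', h2 using Nat.le_induction with
  | base => exact hx
  | succ n hn ih => exact h.succ n i x (h1.trans hn) ih

/-- the other polygons -/
def Qs {ι : Type*} (c : ι → ℤ → ℝ) (a : ι) : Set (ℤ → ℝ) := c '' {b | b ≠ a}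

theorem Blocked.monoQ {d : ℕ} {w : ℤ → Pt} {Q Q' : Set (ℤ → ℝ)} {Cn : Set (ℤ × ℝ)} {p : ℤ → ℝ}
    (h : ∀ q ∈ Q, ∃ q' ∈ Q', ∀ i, q i ≤ q' i) {i : ℤ} (hb : Blocked d w Q Cn p i) :
    Blocked d w Q' Cn p i := by
  rcases hb with ⟨q, hq, x, hx, hxq⟩ | hb
  · obtain ⟨q', hq', hle⟩ := h q hq
    exact Or.inl ⟨q', hq', x, hx, Kc_mono hle hxq⟩
  · exact Or.inr hb

/-- stage invariant -/
structure StInv {ι : Type*} (d : ℕ) (w : ℤ → Pt) (Cn : Set (ℤ × ℝ)) (Lv : ℕ → ℤ → ℝ → Prop)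
    (A : ℤ → Prop) (M : ℕ) (c : ι → ℤ → ℝ) : Prop where
  val : ∀ a, Val d w (Qs c a) Cn (c a)
  blk : ∀ a i, A i → Nd w (c a) i → Blocked d w (Qs c a) Cn (c a) i
  lev : ∀ a i, (Nd w (c a) i ∨ ¬ A i) → Lv M i (c a i)

section
variable {d : ℕ} {w : ℤ → Pt} (hw : Good d w) {Cn : Set (ℤ × ℝ)} (hCf : Cn.Finite) {B : ℤ → ℝ}
  (hB : ∀ p, DP d w p → (∀ ch ∈ Cn, p ch.1 ≤ ch.2) → ∀ i, p i ≤ B i)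
  {Lv : ℕ → ℤ → ℝ → Prop} (hL : LvOK d w Cn Lv)
include hw hL

theorem weak_level {Q : Set (ℤ → ℝ)} (hQ : ∀ q ∈ Q, DP d w q) {p : ℤ → ℝ} (hp : Val d w Q Cn p)
    {A : ℤ → Prop} (hA : ∀ i, A (i + 2 * (d : ℤ)) = A i)
    {M M' : ℕ} {k : ℤ} (hM : 1 ≤ M) (hMM : M ≤ M') (hM' : A (k + d) → M + 1 ≤ M')
    (hlev : ∀ q ∈ Q, ∀ i, ¬ (2 * (d : ℤ)) ∣ (i - k) → (Nd w q i ∨ ¬ A i) → Lv M i (q i))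
    {i : ℤ} (hik : (2 * (d : ℤ)) ∣ (i - k))
    (hb : Blocked d w Q Cn p i) : Lv M' i (p i) := by
  have hd := hw.hd
  rcases hb with ⟨q, hq, x, hx, hxq⟩ | ⟨ch, hch, h1, h2⟩
  · have hqD := hQ q hq
    have h0 := hw.sep_touch hp.dp.per hqD.per (hp.sep q hq) hx hxq
    have hikd : ¬ (2 * (d : ℤ)) ∣ (i + d - k) := by
      intro h
      have := dvd_sub h hik
      rw [show i + (d:ℤ) - k - (i - k) = d by ring] at this
      exact hw.not_dvd_of_lt _ (by omega) (by omega) this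
    by_cases hc : Nd w q (i + d) ∨ ¬ A (i + d)
    · have := hL.flip _ _ _ (hlev q hq (i + d) hikd hc)
      rw [show -q (i + d) = p i by linarith] at this
      exact hL.mono hM hMM (hL.congr _ _ _ _ (by
        rw [show i + (d:ℤ) + d - i = 2 * d by ring]) this)
    · push Not at hc
      obtain ⟨hc1, hc2⟩ := hc
      have hAk : A (k + d) := by
        rwa [← per_dvd hA (show (2 * (d : ℤ)) ∣ (i + d - (k + d)) by simpa using hik)]
      obtain ⟨a, b, a1, a2, b1, b2, ab, ha, hb, xa, xb⟩ := hqD.nbrs hw (i + d) hc1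
      have hab : ¬ (d : ℤ) ∣ (b - a) := fun h => by
        have := Int.le_of_dvd (by omega) h
        omega
      have hna : ¬ (2 * (d : ℤ)) ∣ (a - k) := fun h => by
        have := dvd_sub h hik
        rw [show a - k - (i - k) = a - i by ring] at this
        exact hw.not_dvd_of_lt _ (by omega) (by omega) this
      have hnb : ¬ (2 * (d : ℤ)) ∣ (b - k) := fun h => by
        have := dvd_sub h hik
        rw [show b - k - (i - k) = b - i by ring] at this
        exact hw.not_dvd_of_lt _ (by omega) (by omega) this
      have := hL.meet M b a (XX w q (i + d)) hM hab
        (by rw [xb]; exact hlev q hq b hnb (Or.inl hb))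
        (by rw [xa]; exact hlev q hq a hna (Or.inl ha)) i
      have e := hw.NN_X q (i + d)
      rw [hw.NN_d] at e
      rw [show NN w i (XX w q (i + d)) = p i by linarith] at this
      exact hL.mono (by omega) (hM' hAk) this
  · have := hL.congr _ _ _ _ h1 (hL.cn ch hch)
    rw [← h2, per_dvd hp.dp.per h1] at this
    exact hL.mono le_rfl (hM.trans hMM) this

include hCf hB

theorem stage {ι : Type*} [Fintype ι] {A : ℤ → Prop} (hA : ∀ i, A (i + 2 * (d : ℤ)) = A i)
    {M M' : ℕ} {k : ℤ} (hAk : ¬ A k) (hM : 1 ≤ M) (hMM : M ≤ M') (hM' : A (k + d) → M + 1 ≤ M')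
    {c : ι → ℤ → ℝ} (hc : StInv d w Cn Lv A M c) :
    ∃ c' : ι → ℤ → ℝ, (∀ a i, c a i ≤ c' a i) ∧
      StInv d w Cn Lv (fun i => A i ∨ (2 * (d : ℤ)) ∣ (i - k)) M' c' := by
  have hcong : ∀ i, (2 * (d : ℤ)) ∣ (i - k) → ¬ A i := fun i hi => by
    rw [per_dvd hA hi]; exact hAk
  have main : ∀ S : Finset ι, ∃ c' : ι → ℤ → ℝ, (∀ a i, c a i ≤ c' a i) ∧
      (∀ a, Val d w (Qs c' a) Cn (c' a)) ∧
      (∀ a i, A i → Nd w (c' a) i → Blocked d w (Qs c' a) Cn (c' a) i) ∧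
      (∀ a ∈ S, ∀ i, (2 * (d : ℤ)) ∣ (i - k) → Nd w (c' a) i →
        Blocked d w (Qs c' a) Cn (c' a) i) ∧
      (∀ a i, ¬ (2 * (d : ℤ)) ∣ (i - k) → (Nd w (c' a) i ∨ ¬ A i) → Lv M i (c' a i)) ∧
      (∀ a i, (2 * (d : ℤ)) ∣ (i - k) → Nd w (c' a) i → Lv M' i (c' a i)) := by
    intro S
    induction S using Finset.induction_on with
    | empty =>
      refine ⟨c, fun _ _ => le_rfl, hc.val, hc.blk, by simp, fun a i _ h => hc.lev a i h, ?_⟩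
      intro a i hik hn
      exact hL.mono hM hMM (hc.lev a i (Or.inl hn))
    | insert a S haS ih =>
      obtain ⟨c', h1, h2, h3, h4, h5, h6⟩ := ih
      have hQD : ∀ q ∈ Qs c' a, DP d w q := by
        rintro _ ⟨b, -, rfl⟩; exact (h2 b).dp
      have hQf : (Qs c' a).Finite := (Set.toFinite _).image _
      have hQlev : ∀ q ∈ Qs c' a, ∀ i, ¬ (2 * (d : ℤ)) ∣ (i - k) → (Nd w q i ∨ ¬ A i) →
          Lv M i (q i) := by
        rintro _ ⟨b, -, rfl⟩; exact h5 b
      let J := Finset.Ico (0:ℤ) (0 + 2 * (d : ℤ))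
      let E : Finset ℝ := (Finset.univ ×ˢ J).image (fun x : ι × ℤ => NN w k (XX w (c' x.1) x.2))
      have hEE : ∀ q ∈ Qs c' a, ∀ i, NN w k (XX w q i) ∈ E := by
        rintro _ ⟨b, -, rfl⟩ i
        obtain ⟨j, j1, j2, j3⟩ := hw.red2 0 i
        refine Finset.mem_image.2 ⟨(b, j), Finset.mem_product.2 ⟨Finset.mem_univ _,
          Finset.mem_Ico.2 ⟨j1, j2⟩⟩, ?_⟩
        simp only
        rw [per_dvd (fun i => hw.X_per (h2 b).dp.per i) j3]
      obtain ⟨s, hs, hps, hfix, hsb, hsl⟩ := push hw hQf hQD hCf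
        (fun p hp => hB p hp.dp hp.cn) hA hAk (G := Lv M)
        (by
          intro q hq i hik hikd hn
          have hnk : ¬ (2 * (d : ℤ)) ∣ (i + d - k) := fun h => hikd (by
            have := dvd_sub h (dvd_refl (2 * (d : ℤ)))
            rwa [show i + (d:ℤ) - k - 2 * d = i - (k + d) by ring] at this)
          have := hL.flip _ _ _ (hQlev q hq (i + d) hnk (Or.inl hn))
          exact hL.congr _ _ _ _ (by rw [show i + (d:ℤ) + d - i = 2 * d by ring]) this)
        (fun ch hch i hi => hL.mono le_rfl hM (hL.congr _ _ _ _ hi (hL.cn ch hch))) E hEE _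
        (c' a) (h2 a) le_rfl (h3 a) (h5 a)
      let c'' := Function.update c' a s
      have ea : c'' a = s := Function.update_self ..
      have eb : ∀ b, b ≠ a → c'' b = c' b := fun b hb => Function.update_of_ne hb ..
      have hle : ∀ b i, c' b i ≤ c'' b i := by
        intro b i
        by_cases hb : b = a
        · rw [hb, ea]; exact hps i
        · rw [eb b hb]
      have hQa : Qs c'' a = Qs c' a := by
        apply Set.image_congr
        intro b hb
        exact eb b hb
      have hQmono : ∀ b, ∀ q ∈ Qs c' b, ∃ q' ∈ Qs c'' b, ∀ i, q i ≤ q' i := by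
        rintro b _ ⟨b', hb', rfl⟩
        exact ⟨c'' b', ⟨b', hb', rfl⟩, hle b'⟩
      refine ⟨c'', fun b i => (h1 b i).trans (hle b i), ?_, ?_, ?_, ?_, ?_⟩
      · intro b
        by_cases hb : b = a
        · rw [hb, hQa, ea]; exact hs
        · rw [eb b hb]
          refine ⟨(h2 b).dp, ?_, (h2 b).cn⟩
          rintro _ ⟨b', hb', rfl⟩
          by_cases hb'a : b' = a
          · rw [hb'a, ea]
            exact (hs.sep (c' b) ⟨b, hb, rfl⟩).symm hs.dp.per
          · rw [eb b' hb'a]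
            exact (h2 b).sep _ ⟨b', hb', rfl⟩
      · intro b i hi hn
        by_cases hb : b = a
        · subst hb
          rw [ea] at hn
          rw [hQa, ea]; exact hsb i (Or.inl hi) hn
        · rw [eb b hb] at hn ⊢
          exact (h3 b i hi hn).monoQ (hQmono b)
      · intro b hbS i hi hn
        by_cases hb : b = a
        · subst hb
          rw [ea] at hn
          rw [hQa, ea]; exact hsb i (Or.inr hi) hn
        · rw [eb b hb] at hn ⊢
          exact (h4 b (Finset.mem_of_mem_insert_of_ne hbS hb) i hi hn).monoQ (hQmono b)
      · intro b i hi hn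
        by_cases hb : b = a
        · subst hb
          rw [ea] at hn ⊢
          exact hsl i hi hn
        · rw [eb b hb] at hn ⊢
          exact h5 b i hi hn
      · intro b i hi hn
        by_cases hb : b = a
        · subst hb
          rw [ea] at hn ⊢
          exact weak_level hw hL hQD hs hA hM hMM hM' hQlev hi (hsb i (Or.inr hi) hn)
        · rw [eb b hb] at hn ⊢
          exact h6 b i hi hn
  obtain ⟨c', h1, h2, h3, h4, h5, h6⟩ := main Finset.univ
  refine ⟨c', h1, h2, ?_, ?_⟩
  · rintro a i (hi | hi) hn
    · exact h3 a i hi hn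
    · exact h4 a (Finset.mem_univ _) i hi hn
  · intro a i h
    by_cases hik : (2 * (d : ℤ)) ∣ (i - k)
    · exact h6 a i hik (by tauto)
    · exact hL.mono hM hMM (h5 a i hik (by tauto))

theorem core {ι : Type*} [Fintype ι] {c : ι → ℤ → ℝ} (hv : ∀ a, Val d w (Qs c a) Cn (c a))
    (hl : ∀ a i, Lv 1 i (c a i)) :
    ∃ c' : ι → ℤ → ℝ, (∀ a i, c a i ≤ c' a i) ∧ (∀ a, Val d w (Qs c' a) Cn (c' a)) ∧
      (∀ a i, Nd w (c' a) i → Blocked d w (Qs c' a) Cn (c' a) i) ∧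
      (∀ a i, Lv (2 * d) i (c' a i)) := by
  have hd := hw.hd
  have main : ∀ n : ℕ, n ≤ 2 * d → ∃ c' : ι → ℤ → ℝ, (∀ a i, c a i ≤ c' a i) ∧
      StInv d w Cn Lv (fun i => ∃ k : ℤ, 1 ≤ k ∧ k ≤ n ∧ (2 * (d : ℤ)) ∣ (i - k)) (n - d + 1) c' := by
    intro n
    induction n with
    | zero =>
      intro _
      refine ⟨c, fun _ _ => le_rfl, hv, ?_, ?_⟩
      · rintro a i ⟨k, h1, h2, -⟩
        simp at h2; omega
      · intro a i _
        simpa using hl a i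
    | succ n ih =>
      intro hn
      obtain ⟨c', h1, h2⟩ := ih (by omega)
      have hA : ∀ i : ℤ, (∃ k : ℤ, 1 ≤ k ∧ k ≤ n ∧ (2 * (d : ℤ)) ∣ (i + 2 * d - k)) =
          (∃ k : ℤ, 1 ≤ k ∧ k ≤ n ∧ (2 * (d : ℤ)) ∣ (i - k)) := by
        intro i
        have : ∀ k, (2 * (d : ℤ)) ∣ (i + 2 * d - k) ↔ (2 * (d : ℤ)) ∣ (i - k) := by
          intro k
          rw [show i + 2 * (d:ℤ) - k = (i - k) + 2 * d by ring]
          exact dvd_add_self_right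
        simp only [this]
      obtain ⟨c'', g1, g2⟩ := stage hw hCf hB hL (k := (n : ℤ) + 1)
        (A := fun i => ∃ k : ℤ, 1 ≤ k ∧ k ≤ n ∧ (2 * (d : ℤ)) ∣ (i - k)) hA
        (M := n - d + 1) (M' := n + 1 - d + 1) (by
          rintro ⟨k, k1, k2, k3⟩
          exact hw.not_dvd_of_lt _ (by omega) (by omega) k3) (by omega) (by omega) (by
          rintro ⟨k, k1, k2, k3⟩
          by_contra hcon
          exact hw.not_dvd_of_lt _ (by omega) (by omega) k3) h2
      refine ⟨c'', fun a i => (h1 a i).trans (g1 a i), ?_⟩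
      convert g2 using 2 with i
      constructor
      · rintro ⟨k, k1, k2, k3⟩
        push_cast at k2
        rcases k2.lt_or_eq with h | h
        · exact Or.inl ⟨k, k1, by omega, k3⟩
        · right; rwa [← h]
      · rintro (⟨k, k1, k2, k3⟩ | h)
        · exact ⟨k, k1, by push_cast; omega, k3⟩
        · exact ⟨n + 1, by omega, by push_cast; omega, h⟩
  obtain ⟨c', h1, h2⟩ := main (2 * d) le_rfl
  have hall : ∀ i : ℤ, ∃ k : ℤ, 1 ≤ k ∧ k ≤ (2 * d : ℕ) ∧ (2 * (d : ℤ)) ∣ (i - k) := by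
    intro i
    obtain ⟨j, j1, j2, j3⟩ := hw.red2 1 i
    exact ⟨j, j1, by push_cast; omega, j3⟩
  refine ⟨c', h1, h2.val, fun a i hn => h2.blk a i (hall i) hn, fun a i => ?_⟩
  have hlv : ∀ i, Nd w (c' a) i → Lv (d + 1) i (c' a i) := fun i hn => by
    have := h2.lev a i (Or.inl hn)
    rwa [show 2 * d - d + 1 = d + 1 by omega] at this
  by_cases hn : Nd w (c' a) i
  · exact hL.mono (by omega) (by omega) (hlv i hn)
  · obtain ⟨x, y, a1, a2, b1, b2, ab, hx, hy, ex, ey⟩ := (h2.val a).dp.nbrs hw i hn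
    have hab : ¬ (d : ℤ) ∣ (y - x) := fun h => by
      have := Int.le_of_dvd (by omega) h
      omega
    have := hL.meet (d + 1) y x (XX w (c' a) i) (by omega) hab
      (by rw [ey]; exact hlv y hy) (by rw [ex]; exact hlv x hx) i
    rw [hw.NN_X] at this
    exact hL.mono (by omega) (by omega) this
end


/-- reversal of the direction indices inside blocks of length `d` -/
def sg (d : ℕ) (i : ℤ) : ℤ :=
  if (i - 1) % (d : ℤ) = 0 then i else i + d - 2 * ((i - 1) % (d : ℤ))

section
variable {d : ℕ} (hd : 2 ≤ d)
include hd

theorem sg_add (i : ℤ) : sg d (i + d) = sg d i + d := by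
  unfold sg
  have : (i + d - 1) % (d : ℤ) = (i - 1) % (d : ℤ) := by
    rw [show i + (d:ℤ) - 1 = i - 1 + d by ring, Int.add_emod_right]
  rw [this]
  split_ifs <;> ring

theorem sg_add2 (i : ℤ) : sg d (i + 2 * d) = sg d i + 2 * d := by
  rw [show i + 2 * (d:ℤ) = i + d + d by ring, sg_add hd, sg_add hd]; ring

theorem sg_block (i : ℤ) (h1 : 2 ≤ i) (h2 : i ≤ d) : sg d i = d + 2 - i := by
  unfold sg
  have : (i - 1) % (d : ℤ) = i - 1 := Int.emod_eq_of_lt (by omega) (by omega)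
  rw [this, if_neg (by omega)]; ring

theorem sg_one : sg d 1 = 1 := by simp [sg]

theorem sg_range (i : ℤ) (h1 : 1 ≤ i) (h2 : i ≤ d) : 1 ≤ sg d i ∧ sg d i ≤ d := by
  rcases h1.lt_or_eq with h | h
  · rw [sg_block hd i (by omega) h2]; omega
  · rw [← h, sg_one hd]; omega

theorem sg_range2 (i : ℤ) (h1 : 1 ≤ i) (h2 : i ≤ 2 * d) : 1 ≤ sg d i ∧ sg d i ≤ 2 * d := by
  by_cases h : i ≤ d
  · have := sg_range hd i h1 h; omega
  · have h3 := sg_range hd (i - d) (by omega) (by omega)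
    have h4 := sg_add hd (i - d)
    rw [sub_add_cancel] at h4
    omega

theorem per_d {α : Type*} {f : ℤ → α} (hf : ∀ i, f (i + (d : ℤ)) = f i) (i : ℤ) :
    ∃ j, 1 ≤ j ∧ j ≤ (d:ℤ) ∧ f i = f j := by
  refine ⟨1 + (i - 1) % d, ?_, ?_, ?_⟩
  · have := Int.emod_nonneg (i - 1) (b := (d : ℤ)) (by omega); omega
  · have := Int.emod_lt_of_pos (i - 1) (b := (d : ℤ)) (by omega); omega
  · have hp : Function.Periodic f (d : ℤ) := hf
    have h2 := (hp.int_mul ((i-1)/d)) (1 + (i - 1) % d)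
    rw [← h2]
    congr 1
    have := Int.emod_add_mul_ediv (i - 1) d
    simp only [Int.cast_id]
    linarith

theorem sg_sg (i : ℤ) : sg d (sg d i) = i := by
  obtain ⟨j, h1, h2, h3⟩ := per_d hd (f := fun i => sg d (sg d i) - i) (by
    intro i; simp only [sg_add hd]; ring) i
  have : sg d (sg d j) - j = 0 := by
    rcases h1.lt_or_eq with h | h
    · rw [sg_block hd j (by omega) h2, sg_block hd _ (by omega) (by omega)]; ring
    · rw [← h, sg_one hd, sg_one hd]; ring
  have h3' : sg d (sg d i) - i = sg d (sg d j) - j := h3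
  omega
end

theorem good_of_dirOK {d : ℕ} {v : ℤ → Pt} (hv : DirOK d v) : Good d (fun i => v (sg d i)) := by
  obtain ⟨hd, hv1, hneg, hcr, hx, hsl⟩ := hv
  have hneg' : ∀ i : ℤ, v (sg d (i + d)) = - v (sg d i) := fun i => by
    rw [sg_add hd, hneg]
  have hblock : ∀ i j : ℤ, 1 ≤ i → i < j → j ≤ d → 0 < cross2 (v (sg d i)) (v (sg d j)) := by
    intro i j h1 h2 h3
    have hj := sg_block hd j (by omega) h3
    rcases h1.lt_or_eq with h | h
    · have hi := sg_block hd i (by omega) (by omega)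
      have s := hsl (sg d j) (sg d i) (by omega) (by omega) (by omega)
      have x1 := hx (sg d j) (by omega) (by omega)
      have x2 := hx (sg d i) (by omega) (by omega)
      simp only [cross2]
      have e1 := div_mul_cancel₀ (v (sg d i)).2 x2.ne
      have e2 := div_mul_cancel₀ (v (sg d j)).2 x1.ne
      rw [← e1, ← e2]
      nlinarith [mul_pos (mul_pos_of_neg_of_neg x1 x2) (sub_pos.2 s)]
    · have x1 := hx (sg d j) (by omega) (by omega)
      rw [← h, sg_one hd, hv1]
      simp only [cross2]
      linarith
  refine ⟨hd, hneg', ?_⟩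
  intro i
  obtain ⟨i', h1, h2, h3⟩ := per_d hd (f := fun i => ∀ j : ℤ, i < j → j < i + (d : ℤ) →
      0 < cross2 (v (sg d i)) (v (sg d j))) (by
    intro i
    apply propext
    constructor
    · intro h j j1 j2
      have := h (j + d) (by omega) (by omega)
      rw [hneg', hneg'] at this
      simp only [cross2, Prod.fst_neg, Prod.snd_neg] at *
      linarith
    · intro h j j1 j2
      have := h (j - d) (by omega) (by omega)
      have e := hneg' (j - d)
      rw [sub_add_cancel] at e
      rw [hneg', e]
      simp only [cross2, Prod.fst_neg, Prod.snd_neg] at *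
      linarith) i
  rw [h3]
  intro j j1 j2
  by_cases hj : j ≤ d
  · exact hblock i' j h1 j1 hj
  · have := hblock (j - d) i' (by omega) (by omega) h2
    have e := hneg' (j - d)
    rw [sub_add_cancel] at e
    rw [e]
    simp only [cross2, Prod.fst_neg, Prod.snd_neg] at *
    linarith

theorem Kc_closed (w : ℤ → Pt) (r : ℤ → ℝ) : IsClosed (Kc w r) := by
  have : Kc w r = ⋂ i, {x | NN w i x ≤ r i} := by ext x; simp [Kc]
  rw [this]
  exact isClosed_iInter fun i => isClosed_le (NN_cont w i) continuous_const

theorem closure_Op {w : ℤ → Pt} {p : ℤ → ℝ} (h : (Op w p).Nonempty) :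
    closure (Op w p) = Kc w p := by
  apply Set.Subset.antisymm
  · exact closure_minimal (fun x hx i => (hx i).le) (Kc_closed w p)
  · intro x hx
    obtain ⟨o, ho⟩ := h
    have hc : Continuous fun t : ℝ => x + t • (o - x) := by fun_prop
    have ht : Filter.Tendsto (fun t : ℝ => x + t • (o - x)) (nhdsWithin 0 (Set.Ioi 0)) (nhds x) := by
      have := hc.tendsto 0
      simp only [zero_smul, add_zero] at this
      exact this.mono_left nhdsWithin_le_nhds
    refine mem_closure_of_tendsto ht ?_
    filter_upwards [Ioc_mem_nhdsGT (show (0:ℝ) < 1 by norm_num)] with t htt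
    intro i
    have h1 := hx i
    have h2 := ho i
    rw [NN_line, NN_sub]
    nlinarith [htt.1, htt.2]

theorem Op_convex (w : ℤ → Pt) (p : ℤ → ℝ) : Convex ℝ (Op w p) := by
  intro x hx y hy a b ha hb hab i
  have h1 := hx i
  have h2 := hy i
  rw [NN_add, NN_smul, NN_smul]
  rcases ha.lt_or_eq with h | h
  · have hb' : b = 1 - a := by linarith
    subst hb'
    nlinarith [mul_lt_mul_of_pos_left h1 h, mul_le_mul_of_nonneg_left h2.le hb]
  · subst h
    have : b = 1 := by linarith
    subst this
    linarith

theorem Good.Op_open {d : ℕ} {w : ℤ → Pt} (hw : Good d w) {p : ℤ → ℝ}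
    (hp : ∀ i, p (i + 2 * (d : ℤ)) = p i) : IsOpen (Op w p) := by
  have : Op w p = ⋂ i ∈ Finset.Ico (0:ℤ) (0 + 2 * (d : ℤ)), {x | NN w i x < p i} := by
    ext x
    simp only [Op, Set.mem_setOf_eq, Set.mem_iInter]
    constructor
    · intro h i _; exact h i
    · intro h i
      obtain ⟨j, j1, j2, j3⟩ := hw.red2 0 i
      rw [hw.NN_congr j3, per_dvd hp j3]
      exact h j (Finset.mem_Ico.2 ⟨j1, j2⟩)
  rw [this]
  exact isOpen_biInter_finset fun i _ => isOpen_lt (NN_cont w i) continuous_const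

theorem Good.tight_of_edges {d : ℕ} {w : ℤ → Pt} (hw : Good d w) {p : ℤ → ℝ}
    (h : ∀ i, ∃ a ∈ Kc w p, NN w i a = p i) (i j : ℤ) : NN w j (XX w p i) ≤ p j := by
  choose a ha hai using h
  have hc := hw.pos1 i
  obtain ⟨α, hα⟩ := hw.par i (XX w p i) (a i) (by rw [hw.NN_X, hai])
  obtain ⟨β, hβ⟩ := hw.par (i+1) (XX w p i) (a (i+1)) (by rw [hw.NN_X1, hai])
  have hα0 : 0 ≤ α := by
    have h1 := hw.NN_X1 p i
    rw [hα, NN_line, NN_w] at h1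
    have h2 := ha i (i+1)
    by_contra h; push Not at h
    nlinarith
  have hβ0 : β ≤ 0 := by
    have h1 := hw.NN_X p i
    rw [hβ, NN_line, NN_w, cross_anti] at h1
    have h2 := ha (i+1) i
    by_contra h; push Not at h
    nlinarith
  have hj1 := ha i j
  have hj2 := ha (i+1) j
  rcases hw.adj_sign i j with h | h
  · rw [hα, NN_line]; nlinarith
  · rw [hβ, NN_line]; nlinarith

/-- cone decomposition -/
theorem Good.cone {d : ℕ} {w : ℤ → Pt} (hw : Good d w) (u : Pt) :
    ∃ (i : ℤ) (α β : ℝ), 0 ≤ α ∧ 0 ≤ β ∧ ∀ x, cross2 x u = α * NN w i x + β * NN w (i+1) x := by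
  have hd := hw.hd
  have hg : ∀ i, cross2 (w (i + d)) u = - cross2 (w i) u := fun i => by
    rw [hw.neg]; simp only [cross2, Prod.fst_neg, Prod.snd_neg]; ring
  obtain ⟨i0, hi0⟩ : ∃ i, 0 ≤ cross2 (w i) u := by
    rcases le_total 0 (cross2 (w 0) u) with h | h
    · exact ⟨0, h⟩
    · exact ⟨0 + d, by rw [hg]; linarith⟩
  have hex : ∃ n : ℕ, cross2 (w (i0 + n + 1)) u ≤ 0 :=
    ⟨d - 1, by
      rw [show i0 + ((d - 1 : ℕ) : ℤ) + 1 = i0 + d by omega, hg]; linarith⟩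
  obtain ⟨i, h1, h2⟩ : ∃ i, 0 ≤ cross2 (w i) u ∧ cross2 (w (i+1)) u ≤ 0 := by
    refine ⟨i0 + Nat.find hex, ?_, Nat.find_spec hex⟩
    rcases Nat.eq_zero_or_pos (Nat.find hex) with h | h
    · rw [h]; simpa using hi0
    · have := Nat.find_min hex (m := Nat.find hex - 1) (by omega)
      push Not at this
      rw [show i0 + ((Nat.find hex - 1 : ℕ) : ℤ) + 1 = i0 + (Nat.find hex : ℤ) by omega] at this
      exact this.le
  have hc := hw.pos1 i
  refine ⟨i, -cross2 (w (i+1)) u / cross2 (w i) (w (i+1)), cross2 (w i) u / cross2 (w i) (w (i+1)),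
    div_nonneg (by linarith) hc.le, div_nonneg h1 hc.le, ?_⟩
  intro x
  field_simp
  simp only [NN, cross2]; ring

/-- disjoint polygons are separated -/
theorem Good.sep_of_disj {d : ℕ} {w : ℤ → Pt} (hw : Good d w) {p q : ℤ → ℝ} (hp : DP d w p)
    (hq : DP d w q) (h : Op w p ∩ Op w q = ∅) : SepD d p q := by
  obtain ⟨f, u, hf1, hf2⟩ := geometric_hahn_banach_open_open (Op_convex w p) (hw.Op_open hp.per)
    (Op_convex w q) (hw.Op_open hq.per) (Set.disjoint_iff_inter_eq_empty.2 h)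
  have hfx : ∀ x : Pt, f x = cross2 x (-f (0, 1), f (1, 0)) := by
    intro x
    have : x = x.1 • ((1, 0) : Pt) + x.2 • ((0, 1) : Pt) := by ext <;> simp
    conv_lhs => rw [this]
    rw [map_add, map_smul, map_smul]
    simp only [cross2, smul_eq_mul]; ring
  obtain ⟨i, α, β, hα, hβ, hc⟩ := hw.cone (-f (0, 1), f (1, 0))
  have hk1 : ∀ x ∈ Kc w p, f x ≤ u := by
    rw [← closure_Op hp.ne]
    exact fun x hx => closure_minimal (t := {x | f x ≤ u}) (fun y hy => (hf1 y hy).le)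
      (isClosed_le f.continuous continuous_const) hx
  have hk2 : ∀ x ∈ Kc w q, u ≤ f x := by
    rw [← closure_Op hq.ne]
    exact fun x hx => closure_minimal (t := {x | u ≤ f x}) (fun y hy => (hf2 y hy).le)
      (isClosed_le continuous_const f.continuous) hx
  have g1 := hk1 _ (hp.X_mem hw i)
  have g2 := hk2 _ (hq.X_mem hw (i + d))
  rw [hfx, hc, hw.NN_X, hw.NN_X1] at g1
  have e1 := hw.NN_X q (i + d)
  have e2 := hw.NN_X1 q (i + d)
  rw [show i + (d:ℤ) + 1 = i + 1 + d by ring] at e2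
  rw [hw.NN_d] at e1 e2
  rw [hfx, hc, show NN w i (XX w q (i + d)) = - q (i + d) by linarith,
    show NN w (i+1) (XX w q (i + d)) = - q (i + 1 + d) by linarith] at g2
  by_contra hcon
  unfold SepD at hcon
  push Not at hcon
  have c1 := hcon i
  have c2 := hcon (i+1)
  have hα0 : α = 0 := by
    by_contra h0
    have : 0 < α := lt_of_le_of_ne hα (Ne.symm h0)
    nlinarith
  have hβ0 : β = 0 := by
    by_contra h0
    have : 0 < β := lt_of_le_of_ne hβ (Ne.symm h0)
    nlinarith
  obtain ⟨x, hx⟩ := hp.ne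
  obtain ⟨y, hy⟩ := hq.ne
  have k1 := hf1 x hx
  have k2 := hf2 y hy
  rw [hfx, hc, hα0, hβ0] at k1 k2
  linarith

/-- reindexed directions -/
def ww (d : ℕ) (v : ℤ → Pt) : ℤ → Pt := fun i => v (sg d i)

/-- reindexed offsets -/
def tt (d : ℕ) (p : ℤ → ℝ) : ℤ → ℝ := fun i => p (sg d i)

section
variable {d : ℕ} {v : ℤ → Pt} (hv : DirOK d v)
include hv

theorem gd : Good d (ww d v) := good_of_dirOK hv

theorem tt_tt (p : ℤ → ℝ) : tt d (tt d p) = p := by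
  funext i; simp only [tt, sg_sg hv.1]

theorem ww_sg (i : ℤ) : ww d v (sg d i) = v i := by
  simp only [ww, sg_sg hv.1]

theorem tt_sg (p : ℤ → ℝ) (i : ℤ) : tt d p (sg d i) = p i := by
  simp only [tt, sg_sg hv.1]

theorem tt_per {p : ℤ → ℝ} (hp : ∀ i, p (i + 2 * (d : ℤ)) = p i) (i : ℤ) :
    tt d p (i + 2 * (d : ℤ)) = tt d p i := by
  simp only [tt, sg_add2 hv.1, hp]

theorem dot_NN (x : Pt) (i : ℤ) : dot2 x (perp2 (v i)) = NN (ww d v) (sg d i) x := by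
  rw [NN, ww_sg hv]; simp only [dot2, perp2, cross2]; ring

theorem DOPset_eq {p : ℤ → ℝ} (hp : ∀ i, p (i + 2 * (d : ℤ)) = p i) :
    DOPset d v p = Op (ww d v) (tt d p) := by
  ext x
  constructor
  · intro h i
    obtain ⟨j, j1, j2, j3⟩ := (gd hv).red2 1 i
    rw [(gd hv).NN_congr j3, per_dvd (tt_per hv hp) j3]
    have hr := sg_range2 hv.1 j j1 (by omega)
    have := h (sg d j) (Finset.mem_Icc.2 hr)
    rwa [dot_NN hv, sg_sg hv.1] at this
  · intro h i _
    have := h (sg d i)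
    rwa [dot_NN hv, ← tt_sg hv p i]

theorem DOPset_tt {p : ℤ → ℝ} (hp : DP d (ww d v) p) :
    DOPset d v (tt d p) = Op (ww d v) p := by
  rw [DOPset_eq hv (tt_per hv hp.per), tt_tt hv]

theorem closure_eq {p : ℤ → ℝ} (hp : DP d (ww d v) (tt d p)) (hper : ∀ i, p (i + 2 * (d : ℤ)) = p i) :
    closure (DOPset d v p) = Kc (ww d v) (tt d p) := by
  rw [DOPset_eq hv hper, closure_Op hp.ne]

theorem edge_eq {p : ℤ → ℝ} (hp : DP d (ww d v) (tt d p)) (hper : ∀ i, p (i + 2 * (d : ℤ)) = p i)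
    (i : ℤ) : edgeOf d v p i = {x | x ∈ Kc (ww d v) (tt d p) ∧
      NN (ww d v) (sg d i) x = tt d p (sg d i)} := by
  ext x
  unfold edgeOf
  rw [closure_eq hv hp hper, tt_sg hv]
  constructor
  · rintro ⟨h1, h2⟩
    exact ⟨h1, by rw [← dot_NN hv]; exact h2⟩
  · rintro ⟨h1, h2⟩
    exact ⟨h1, by rw [← dot_NN hv] at h2; exact h2⟩

theorem DP_of_DOP {p : ℤ → ℝ} (h : IsDOP d v p) : DP d (ww d v) (tt d p) := by
  obtain ⟨h1, -, h3, h4⟩ := h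
  have hne : (Op (ww d v) (tt d p)).Nonempty := by rwa [← DOPset_eq hv h3]
  refine ⟨tt_per hv h3, hne, (gd hv).tight_of_edges ?_⟩
  intro i
  obtain ⟨j, j1, j2, j3⟩ := (gd hv).red2 1 i
  have hr := sg_range2 hv.1 j j1 (by omega)
  obtain ⟨x, hx1, hx2⟩ := h4 (sg d j) (Finset.mem_Icc.2 hr)
  rw [DOPset_eq hv h3, closure_Op hne] at hx1
  refine ⟨x, hx1, ?_⟩
  rw [(gd hv).NN_congr j3, per_dvd (tt_per hv h3) j3]
  have hx2' : dot2 x (perp2 (v (sg d j))) = p (sg d j) := hx2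
  rwa [dot_NN hv, sg_sg hv.1] at hx2'

theorem DOP_of_DP {p : ℤ → ℝ} (h : DP d (ww d v) p) : IsDOP d v (tt d p) := by
  refine ⟨?_, ?_, tt_per hv h.per, ?_⟩
  · rw [DOPset_tt hv h]; exact h.ne
  · rw [DOPset_tt hv h]
    exact ((gd hv).Kc_compact p).isBounded.subset fun x hx i => (hx i).le
  · intro i _
    rw [edge_eq hv (by rwa [tt_tt hv]) (tt_per hv h.per), tt_tt hv]
    exact ⟨_, h.X_mem (gd hv) _, (gd hv).NN_X p _⟩

theorem edge_seg {p : ℤ → ℝ} (hp : DP d (ww d v) (tt d p))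
    (hper : ∀ i, p (i + 2 * (d : ℤ)) = p i) (i : ℤ) :
    edgeOf d v p i = segment ℝ (XX (ww d v) (tt d p) (sg d i - 1)) (XX (ww d v) (tt d p) (sg d i)) := by
  have hw := gd hv
  rw [edge_eq hv hp hper]
  set j := sg d i
  obtain ⟨t, ht0, ht⟩ := hp.edge hw j
  ext x
  rw [segment_eq_image']
  constructor
  · rintro ⟨h1, h2⟩
    obtain ⟨s, s0, st, hs⟩ := hp.on_line hw j ht h1 h2
    rcases ht0.lt_or_eq with h | h
    · refine ⟨s / t, ⟨by positivity, by rw [div_le_one h]; exact st⟩, ?_⟩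
      simp only
      rw [ht, hs, add_sub_cancel_left, smul_smul, div_mul_cancel₀ _ h.ne']
    · refine ⟨0, by simp, ?_⟩
      have : s = 0 := by linarith
      simp [hs, this]
  · rintro ⟨θ, ⟨h0, h1⟩, rfl⟩
    simp only
    have ha := hp.X_mem hw (j - 1)
    have hb := hp.X_mem hw j
    constructor
    · intro k
      have ha := ha k
      have hb := hb k
      rw [NN_line, NN_sub]
      nlinarith
    · rw [NN_line, NN_sub, hw.NN_X, hw.NN_X1']; ring

theorem TH_eq {p : ℤ → ℝ} (hp : DP d (ww d v) (tt d p))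
    (hper : ∀ i, p (i + 2 * (d : ℤ)) = p i) (i : ℤ) :
    THpair d v p i = (XX (ww d v) (tt d p) (sg d i - 1), XX (ww d v) (tt d p) (sg d i)) := by
  have hw := gd hv
  have hseg := edge_seg hv hp hper i
  set X := XX (ww d v) (tt d p) (sg d i - 1) with hX
  set Y := XX (ww d v) (tt d p) (sg d i) with hY
  obtain ⟨t, ht0, ht⟩ := hp.edge hw (sg d i)
  rw [← hX, ← hY, ww_sg hv] at ht
  have hex : ∃ th : Pt × Pt, IsTH v i (edgeOf d v p i) th.1 th.2 :=
    ⟨(X, Y), hseg, t, ht0, by simp [ht]⟩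
  unfold THpair
  rw [dif_pos hex]
  obtain ⟨h1, c, hc0, hc⟩ := hex.choose_spec
  set A := hex.choose.1 with hA
  set B := hex.choose.2 with hB
  rw [hseg] at h1
  -- functional
  have hpos : 0 < cross2 (v i) (ww d v (sg d i + 1)) := by
    have := hw.pos1 (sg d i); rwa [ww_sg hv] at this
  set f := NN (ww d v) (sg d i + 1)
  have hfv : f (v i) = cross2 (v i) (ww d v (sg d i + 1)) := rfl
  have key : ∀ (P Q x : Pt) (c : ℝ), 0 ≤ c → Q = P + c • v i → x ∈ segment ℝ P Q →
      ∃ s, 0 ≤ s ∧ s ≤ c ∧ x = P + s • v i := by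
    intro P Q x c hc hQ hx
    rw [segment_eq_image'] at hx
    obtain ⟨θ, ⟨a1, a2⟩, rfl⟩ := hx
    exact ⟨θ * c, by positivity, by nlinarith, by simp [hQ, smul_smul]⟩
  have hB' : B = A + c • v i := by rw [← hc]; abel
  obtain ⟨s1, a1, a2, a3⟩ := key X Y A t ht0 ht (h1 ▸ left_mem_segment ℝ A B)
  obtain ⟨s2, b1, b2, b3⟩ := key X Y B t ht0 ht (h1 ▸ right_mem_segment ℝ A B)
  obtain ⟨s3, c1, c2, c3⟩ := key A B X c hc0 hB' (h1 ▸ left_mem_segment ℝ X Y)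
  obtain ⟨s4, d1, d2, d3⟩ := key A B Y c hc0 hB' (h1 ▸ right_mem_segment ℝ X Y)
  have hinj : ∀ r : ℝ, r • v i = 0 → r = 0 := by
    intro r hr
    have : f (r • v i) = 0 := by rw [hr]; simp [f, NN, cross2]
    have this := (NN_smul (ww d v) (sg d i + 1) r (v i)).symm.trans this
    rcases mul_eq_zero.1 this with h | h
    · exact h
    · exact absurd (hfv.symm.trans h) hpos.ne'
  have e1 : s1 + s3 = 0 := by
    apply hinj
    have : X + (s1 + s3) • v i = X := by
      rw [add_smul, ← add_assoc, ← a3, ← c3]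
    simpa using this
  have hs1 : s1 = 0 := by linarith
  have hAX : A = X := by rw [a3, hs1]; simp
  have e2 : s4 - t = 0 := by
    apply hinj
    rw [sub_smul, sub_eq_zero]
    have : A + s4 • v i = X + t • v i := by rw [← d3, ← ht]
    rw [hAX] at this
    exact add_left_cancel this
  have e3 : s2 - c = 0 := by
    apply hinj
    rw [sub_smul, sub_eq_zero]
    have : X + s2 • v i = A + c • v i := by rw [← b3, ← hB']
    rw [hAX] at this
    exact add_left_cancel this
  have hct : c = t := by linarith
  have hBY : B = Y := by rw [hB', hAX, ht, hct]
  exact Prod.ext hAX hBY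

theorem tl_eq {p : ℤ → ℝ} (hp : DP d (ww d v) (tt d p))
    (hper : ∀ i, p (i + 2 * (d : ℤ)) = p i) (i : ℤ) :
    tlPt d v p i = XX (ww d v) (tt d p) (sg d i - 1) := by
  rw [tlPt, TH_eq hv hp hper]

theorem hd_eq {p : ℤ → ℝ} (hp : DP d (ww d v) (tt d p))
    (hper : ∀ i, p (i + 2 * (d : ℤ)) = p i) (i : ℤ) :
    hdPt d v p i = XX (ww d v) (tt d p) (sg d i) := by
  rw [hdPt, TH_eq hv hp hper]

theorem R_sub_relint {p : ℤ → ℝ} (hp : DP d (ww d v) (tt d p))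
    (hper : ∀ i, p (i + 2 * (d : ℤ)) = p i) (i : ℤ) {x : Pt}
    (hx : x ∈ RR d (ww d v) (tt d p) (sg d i)) : x ∈ relintE d v p i := by
  have hw := gd hv
  have hd := hv.1
  unfold relintE
  rw [tl_eq hv hp hper, hd_eq hv hp hper, ← edge_seg hv hp hper, edge_eq hv hp hper]
  refine ⟨⟨DP.R_sub hw hp _ hx, hx.1⟩, ?_⟩
  rintro (h | h)
  · have h1 := hx.2 (sg d i - 1) (hw.not_dvd_of_lt' _ (by omega) (by omega))
    rw [h, hw.NN_X] at h1
    exact lt_irrefl _ h1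
  · have h1 := hx.2 (sg d i + 1) (hw.not_dvd_of_lt _ (by omega) (by omega))
    have h : x = _ := h
    rw [h, hw.NN_X1] at h1
    exact lt_irrefl _ h1

theorem vert_X {p : ℤ → ℝ} (hp : DP d (ww d v) (tt d p))
    (hper : ∀ i, p (i + 2 * (d : ℤ)) = p i) {x : Pt} (h : VertexOf d v p x) :
    ∃ j, x = XX (ww d v) (tt d p) j := by
  obtain ⟨i, -, h | h⟩ := h
  · exact ⟨_, h.trans (tl_eq hv hp hper i)⟩
  · exact ⟨_, h.trans (hd_eq hv hp hper i)⟩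

theorem X_vert {p : ℤ → ℝ} (hp : DP d (ww d v) (tt d p))
    (hper : ∀ i, p (i + 2 * (d : ℤ)) = p i) (j : ℤ) :
    VertexOf d v p (XX (ww d v) (tt d p) j) := by
  have hw := gd hv
  obtain ⟨k, k1, k2, k3⟩ := hw.red2 1 j
  have hr := sg_range2 hv.1 k k1 (by omega)
  refine ⟨sg d k, Finset.mem_Icc.2 hr, Or.inr ?_⟩
  rw [hd_eq hv hp hper, sg_sg hv.1]
  exact per_dvd (hw.X_per hp.per) k3

/-- lines as level sets -/
theorem lineThr_eq (i : ℤ) (a : Pt) :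
    lineThr a (v i) = {x | NN (ww d v) (sg d i) x = NN (ww d v) (sg d i) a} := by
  have hw := gd hv
  ext x
  constructor
  · rintro ⟨t, rfl⟩
    show NN _ _ _ = _
    have h0 : NN (ww d v) (sg d i) (v i) = 0 := by rw [NN, ww_sg hv, cross2_self]
    rw [NN_line, h0]; ring
  · intro h
    obtain ⟨t, ht⟩ := hw.par _ _ _ h
    exact ⟨t, by rw [ht, ww_sg hv]⟩

theorem lineD (j : ℤ) (a : Pt) : ∃ i : ℤ, 1 ≤ i ∧ i ≤ (d : ℤ) ∧
    {x | NN (ww d v) j x = NN (ww d v) j a} = lineThr a (v i) := by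
  have hw := gd hv
  obtain ⟨k, k1, k2, k3⟩ := per_d hv.1
    (f := fun j => {x | NN (ww d v) j x = NN (ww d v) j a}) (by
      intro j
      ext x
      show NN _ _ _ = _ ↔ NN _ _ _ = _
      rw [hw.NN_d, hw.NN_d, neg_inj]) j
  have hr := sg_range hv.1 k k1 k2
  refine ⟨sg d k, hr.1, hr.2, ?_⟩
  rw [lineThr_eq hv, sg_sg hv.1]
  exact k3

end

/-- the level predicate given by the grid -/
def LvG (d : ℕ) (v : ℤ → Pt) (I : Set (ℤ → ℝ)) (M : ℕ) (i : ℤ) (c : ℝ) : Prop :=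
  {x | NN (ww d v) i x = c} ∈ Lgrid d v I M

section
variable {d : ℕ} {v : ℤ → Pt} (hv : DirOK d v) (I : Set (ℤ → ℝ))
include hv

omit hv in
theorem grid_fan {M : ℕ} {l : Set Pt} (h : l ∈ Lgrid d v I M) : ∃ (a : Pt) (i : ℤ),
    l = lineThr a (v i) ∧ ∀ i' : ℤ, 1 ≤ i' → i' ≤ (d : ℤ) → lineThr a (v i') ∈ Lgrid d v I M := by
  match M, h with
  | 0, h => exact absurd h (Set.notMem_empty _)
  | 1, h =>
    obtain ⟨i, i1, i2, x, hx, rfl⟩ := h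
    exact ⟨x, i, rfl, fun i' a b => ⟨i', a, b, x, hx, rfl⟩⟩
  | (k+2), h =>
    obtain ⟨i, i1, i2, x, hx, rfl⟩ := h
    exact ⟨x, i, rfl, fun i' a b => ⟨i', a, b, x, hx, rfl⟩⟩

theorem Lv_point {M : ℕ} {a : Pt}
    (h : ∀ i' : ℤ, 1 ≤ i' → i' ≤ (d : ℤ) → lineThr a (v i') ∈ Lgrid d v I M) (j : ℤ) :
    LvG d v I M j (NN (ww d v) j a) := by
  obtain ⟨i, i1, i2, e⟩ := lineD hv j a
  unfold LvG
  rw [e]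
  exact h i i1 i2

theorem Lv_Vof {M : ℕ} {a b : ℤ} {x : Pt} (hab : ¬ (d : ℤ) ∣ (a - b))
    (ha : LvG d v I M a (NN (ww d v) a x)) (hb : LvG d v I M b (NN (ww d v) b x)) :
    x ∈ Vof (Lgrid d v I M) := by
  refine ⟨_, ha, _, hb, ?_, rfl, rfl⟩
  intro e
  have h1 : x + ww d v a ∈ {y | NN (ww d v) a y = NN (ww d v) a x} := by
    show NN _ _ _ = _
    rw [NN_add, NN_w, cross2_self, add_zero]
  rw [e] at h1
  have h1 : NN _ _ _ = _ := h1
  rw [NN_add, NN_w] at h1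
  have h2 := (gd hv).cross_eq_zero a b (by linarith)
  exact hab ((dvd_sub_comm).1 h2)

theorem Lv_meet (M : ℕ) (a b : ℤ) (x : Pt) (hM : 1 ≤ M) (hab : ¬ (d : ℤ) ∣ (a - b))
    (ha : LvG d v I M a (NN (ww d v) a x)) (hb : LvG d v I M b (NN (ww d v) b x)) (i : ℤ) :
    LvG d v I (M + 1) i (NN (ww d v) i x) := by
  obtain ⟨m, rfl⟩ : ∃ m, M = m + 1 := ⟨M - 1, by omega⟩
  apply Lv_point hv
  intro i' h1 h2
  exact ⟨i', h1, h2, x, Lv_Vof hv I hab ha hb, rfl⟩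

theorem LvG_ok {Cn : Set (ℤ × ℝ)} (hCn : ∀ ch ∈ Cn, LvG d v I 1 ch.1 ch.2) :
    LvOK d (ww d v) Cn (LvG d v I) where
  congr M i j x hij h := by
    unfold LvG at *
    have : {y | NN (ww d v) j y = x} = {y | NN (ww d v) i y = x} := by
      ext y
      show NN _ _ _ = _ ↔ NN _ _ _ = _
      rw [(gd hv).NN_congr hij]
    rwa [this]
  flip M i x h := by
    unfold LvG at *
    have : {y | NN (ww d v) (i + d) y = -x} = {y | NN (ww d v) i y = x} := by
      ext y
      show NN _ _ _ = _ ↔ NN _ _ _ = _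
      rw [(gd hv).NN_d, neg_inj]
    rwa [this]
  succ M i x hM h := by
    obtain ⟨a, i0, e, hf⟩ := grid_fan I h
    have ha : NN (ww d v) i a = x := by
      have : a ∈ {y | NN (ww d v) i y = x} := by rw [e]; exact ⟨0, by simp⟩
      exact this
    have hp := Lv_point hv I hf
    rw [← ha]
    refine Lv_meet hv I M 0 1 a hM ?_ (hp 0) (hp 1) i
    intro hdv
    have h2 := hv.1
    have := Int.le_of_dvd (by norm_num) ((dvd_neg).2 hdv)
    omega
  meet M a b x hM hab ha hb := Lv_meet hv I M a b x hM hab ha hb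
  cn := hCn

theorem Lv_init {p : ℤ → ℝ} (hpI : p ∈ I) (hp : IsDOP d v p) (i : ℤ) :
    LvG d v I 1 i (tt d p i) := by
  have hD := DP_of_DOP hv hp
  have := Lv_point hv I (M := 1) (a := XX (ww d v) (tt d p) i) (fun i' h1 h2 =>
    ⟨i', h1, h2, _, ⟨p, hpI, X_vert hv hD hp.2.2.1 i⟩, rfl⟩) i
  rwa [(gd hv).NN_X] at this

theorem side {l : Set Pt} (hl : l ∈ LOne d v I) {a u : Pt} (hs : segment ℝ a (a + u) ⊆ l)
    (hu : u ≠ 0) {D : ℝ} (hD : D ≠ 0) : ∃ (j : ℤ) (κ : ℝ), 0 < κ ∧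
      (∀ y, κ * NN (ww d v) j y = cross2 y u / D) ∧ LvG d v I 1 j (NN (ww d v) j a) := by
  have hw := gd hv
  obtain ⟨x0, i, e, hf⟩ := grid_fan I (M := 1) hl
  have ha : a ∈ lineThr x0 (v i) := e ▸ hs (left_mem_segment ℝ _ _)
  have hb : a + u ∈ lineThr x0 (v i) := e ▸ hs (right_mem_segment ℝ _ _)
  have hl' : l = {x | NN (ww d v) (sg d i) x = NN (ww d v) (sg d i) a} := by
    rw [e, lineThr_eq hv]
    rw [lineThr_eq hv] at ha
    have ha : NN _ _ _ = _ := ha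
    rw [ha]
  have hLv : LvG d v I 1 (sg d i) (NN (ww d v) (sg d i) a) := by
    unfold LvG; rw [← hl']; exact hl
  obtain ⟨s, hs1⟩ := ha
  obtain ⟨t, ht1⟩ := hb
  have huv : u = (t - s) • ww d v (sg d i) := by
    rw [ww_sg hv, sub_smul]
    have : u = (a + u) - a := by abel
    rw [this, ht1, hs1]; abel
  have hts : t - s ≠ 0 := by
    intro h; apply hu; rw [huv, h, zero_smul]
  have hcr : ∀ y, cross2 y u = (t - s) * NN (ww d v) (sg d i) y := by
    intro y
    conv_lhs => rw [huv]
    simp only [NN, cross2, Prod.smul_fst, Prod.smul_snd, smul_eq_mul]; ring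
  rcases lt_or_gt_of_ne (div_ne_zero hts hD) with h | h
  · refine ⟨sg d i + d, -((t - s) / D), by linarith, fun y => ?_, ?_⟩
    · rw [hw.NN_d, hcr]; ring
    · rw [hw.NN_d]
      exact (LvG_ok hv I (Cn := ∅) (by simp)).flip _ _ _ hLv
  · refine ⟨sg d i, (t - s) / D, h, fun y => ?_, hLv⟩
    rw [hcr]; ring

theorem para {Cstar : Set Pt} (hC : ∃ a u w : Pt, cross2 u w ≠ 0 ∧
      Cstar = (fun st : ℝ × ℝ => a + st.1 • u + st.2 • w) ''
        {st : ℝ × ℝ | st.1 ∈ Set.Icc (0 : ℝ) 1 ∧ st.2 ∈ Set.Icc (0 : ℝ) 1} ∧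
      (∃ l ∈ LOne d v I, segment ℝ a (a + u) ⊆ l) ∧
      (∃ l ∈ LOne d v I, segment ℝ (a + w) (a + u + w) ⊆ l) ∧
      (∃ l ∈ LOne d v I, segment ℝ a (a + w) ⊆ l) ∧
      (∃ l ∈ LOne d v I, segment ℝ (a + u) (a + u + w) ⊆ l)) :
    IsCompact Cstar ∧ ∃ Cn : Set (ℤ × ℝ), Cn.Finite ∧ (∀ ch ∈ Cn, LvG d v I 1 ch.1 ch.2) ∧
      ∀ x, x ∈ Cstar ↔ ∀ ch ∈ Cn, NN (ww d v) ch.1 x ≤ ch.2 := by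
  obtain ⟨a, u, z, hD, hCs, ⟨l1, hl1, s1⟩, ⟨l2, hl2, s2⟩, ⟨l3, hl3, s3⟩, ⟨l4, hl4, s4⟩⟩ := hC
  have hu : u ≠ 0 := by rintro rfl; simp [cross2] at hD
  have hz : z ≠ 0 := by rintro rfl; simp [cross2] at hD
  constructor
  · rw [hCs]
    have : {st : ℝ × ℝ | st.1 ∈ Set.Icc (0 : ℝ) 1 ∧ st.2 ∈ Set.Icc (0 : ℝ) 1} =
      Set.Icc (0:ℝ) 1 ×ˢ Set.Icc (0:ℝ) 1 := rfl
    rw [this]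
    exact (isCompact_Icc.prod isCompact_Icc).image (by fun_prop)
  rw [show a + u + z = a + z + u by abel] at s2
  obtain ⟨j1, k1, p1, q1, r1⟩ := side hv I hl1 s1 hu hD
  obtain ⟨j2, k2, p2, q2, r2⟩ := side hv I hl2 s2 hu (neg_ne_zero.2 hD)
  obtain ⟨j3, k3, p3, q3, r3⟩ := side hv I hl3 s3 hz (neg_ne_zero.2 hD)
  obtain ⟨j4, k4, p4, q4, r4⟩ := side hv I hl4 s4 hz hD
  refine ⟨{(j1, NN (ww d v) j1 a), (j2, NN (ww d v) j2 (a + z)), (j3, NN (ww d v) j3 a),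
    (j4, NN (ww d v) j4 (a + u))}, by simp, ?_, ?_⟩
  · rintro ch (rfl | rfl | rfl | rfl)
    · exact r1
    · exact r2
    · exact r3
    · exact r4
  intro x
  have hle : ∀ (j : ℤ) (k : ℝ) (b : Pt), 0 < k →
      (NN (ww d v) j x ≤ NN (ww d v) j b ↔ k * NN (ww d v) j (x - b) ≤ 0) := by
    intro j k b hk
    rw [NN_sub]
    constructor
    · intro h; nlinarith
    · intro h; by_contra h'; push Not at h'; nlinarith
  have hfor : (∀ ch ∈ ({(j1, NN (ww d v) j1 a), (j2, NN (ww d v) j2 (a + z)), (j3, NN (ww d v) j3 a),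
      (j4, NN (ww d v) j4 (a + u))} : Set (ℤ × ℝ)), NN (ww d v) ch.1 x ≤ ch.2) ↔
      (cross2 (x - a) u / cross2 u z ≤ 0 ∧ cross2 (x - (a + z)) u / -cross2 u z ≤ 0 ∧
      cross2 (x - a) z / -cross2 u z ≤ 0 ∧ cross2 (x - (a + u)) z / cross2 u z ≤ 0) := by
    simp only [Set.mem_insert_iff, Set.mem_singleton_iff, forall_eq_or_imp, forall_eq]
    rw [hle j1 k1 _ p1, hle j2 k2 _ p2, hle j3 k3 _ p3, hle j4 k4 _ p4, q1, q2, q3, q4]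
  rw [hfor, hCs]
  have g1 : cross2 (x - a) u / cross2 u z = - (cross2 u (x - a) / cross2 u z) := by
    rw [cross_anti (x - a) u]; ring
  have g2 : cross2 (x - (a + z)) u / -cross2 u z = cross2 u (x - a) / cross2 u z - 1 := by
    field_simp
    simp only [cross2, Prod.fst_sub, Prod.snd_sub, Prod.fst_add, Prod.snd_add]; ring
  have g3 : cross2 (x - a) z / -cross2 u z = - (cross2 (x - a) z / cross2 u z) := by
    rw [div_neg]
  have g4 : cross2 (x - (a + u)) z / cross2 u z = cross2 (x - a) z / cross2 u z - 1 := by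
    field_simp
    simp only [cross2, Prod.fst_sub, Prod.snd_sub, Prod.fst_add, Prod.snd_add]; ring
  rw [g1, g2, g3, g4]
  constructor
  · rintro ⟨⟨s, t⟩, ⟨⟨h1, h2⟩, h3, h4⟩, rfl⟩
    have e1 : cross2 u (a + s • u + t • z - a) / cross2 u z = t := by
      rw [div_eq_iff hD]
      simp only [cross2, Prod.fst_sub, Prod.snd_sub, Prod.fst_add, Prod.snd_add, Prod.smul_fst,
        Prod.smul_snd, smul_eq_mul]; ring
    have e2 : cross2 (a + s • u + t • z - a) z / cross2 u z = s := by
      rw [div_eq_iff hD]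
      simp only [cross2, Prod.fst_sub, Prod.snd_sub, Prod.fst_add, Prod.snd_add, Prod.smul_fst,
        Prod.smul_snd, smul_eq_mul]; ring
    simp only at h1 h2 h3 h4 ⊢
    rw [e1, e2]
    refine ⟨?_, ?_, ?_, ?_⟩ <;> linarith
  · rintro ⟨h1, h2, h3, h4⟩
    refine ⟨(cross2 (x - a) z / cross2 u z, cross2 u (x - a) / cross2 u z),
      ⟨⟨by simp only; linarith, by simp only; linarith⟩,
        ⟨by simp only; linarith, by simp only; linarith⟩⟩, ?_⟩
    ext
    · simp only [Prod.fst_add, Prod.smul_fst, smul_eq_mul]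
      field_simp
      simp only [cross2, Prod.fst_sub, Prod.snd_sub]; ring
    · simp only [Prod.snd_add, Prod.smul_snd, smul_eq_mul]
      field_simp
      simp only [cross2, Prod.fst_sub, Prod.snd_sub]; ring

theorem front {Cstar : Set Pt} {Cn : Set (ℤ × ℝ)}
    (h : ∀ x, x ∈ Cstar ↔ ∀ ch ∈ Cn, NN (ww d v) ch.1 x ≤ ch.2) {x : Pt} (hx : x ∈ Cstar)
    {ch : ℤ × ℝ} (hch : ch ∈ Cn) (he : NN (ww d v) ch.1 x = ch.2) : x ∈ frontier Cstar := by
  have hw := gd hv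
  refine ⟨subset_closure hx, fun hi => ?_⟩
  have hc : Continuous fun t : ℝ => x + t • (- ww d v (ch.1 + 1)) := by fun_prop
  have ht := hc.tendsto 0
  simp only [zero_smul, add_zero] at ht
  have hn := ht (isOpen_interior.mem_nhds hi)
  have hn' : ∀ᶠ t : ℝ in nhdsWithin 0 (Set.Ioi 0),
      x + t • (- ww d v (ch.1 + 1)) ∈ interior Cstar ∧ 0 < t :=
    Filter.Eventually.and (Filter.Eventually.filter_mono nhdsWithin_le_nhds hn)
      self_mem_nhdsWithin
  obtain ⟨t, h1, h2⟩ := hn'.exists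
  have h3 := (h _).1 (interior_subset h1) ch hch
  have h4 := hw.pos1 ch.1
  have e : NN (ww d v) ch.1 (- ww d v (ch.1 + 1)) = cross2 (ww d v ch.1) (ww d v (ch.1 + 1)) := by
    simp only [NN, cross2, Prod.fst_neg, Prod.snd_neg]; ring
  rw [NN_line, he, e] at h3
  nlinarith

end

/-- Existence of a maximal extension: given a finite family `I` of
`d`-DOPs, a bounding closed parallelogram `C*` whose four sides lie on lines of `L₁`,
and an independent subfamily `OPT ⊆ I` with `cl(P) ⊆ C*` for all `P ∈ OPT`, there are a
family `OPT'` of `d`-DOPs and a bijection `ext : OPT → OPT'` with: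
(E1) `OPT'` is independent, `cl(Q) ⊆ C*` for all `Q ∈ OPT'`, every edge of every
`Q ∈ OPT'` lies on a line of `L_{2d}` and every vertex of every `Q ∈ OPT'` is in
`V_{2d}`; (E2) `P ⊆ ext(P)` for all `P ∈ OPT`; (E3) for every `Q ∈ OPT'` and every
non-degenerate edge `e` of `Q`, `relint(e)` meets `∂Q'` for some `Q' ∈ OPT'` with
`Q' ≠ Q`, or `relint(e)` meets `∂C*`. -/
theorem stmt7 (d : ℕ) (v : ℤ → Pt) (hv : DirOK d v)
    (I : Set (ℤ → ℝ)) (hfin : I.Finite) (hIDOP : ∀ p ∈ I, IsDOP d v p)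
    (Cstar : Set Pt)
    (hC : ∃ a u w : Pt, cross2 u w ≠ 0 ∧
      Cstar = (fun st : ℝ × ℝ => a + st.1 • u + st.2 • w) ''
        {st : ℝ × ℝ | st.1 ∈ Set.Icc (0 : ℝ) 1 ∧ st.2 ∈ Set.Icc (0 : ℝ) 1} ∧
      (∃ l ∈ LOne d v I, segment ℝ a (a + u) ⊆ l) ∧
      (∃ l ∈ LOne d v I, segment ℝ (a + w) (a + u + w) ⊆ l) ∧
      (∃ l ∈ LOne d v I, segment ℝ a (a + w) ⊆ l) ∧
      (∃ l ∈ LOne d v I, segment ℝ (a + u) (a + u + w) ⊆ l))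
    (OPT : Set (ℤ → ℝ)) (hOsub : OPT ⊆ I) (hOind : Indep d v OPT)
    (hOin : ∀ p ∈ OPT, closure (DOPset d v p) ⊆ Cstar) :
    ∃ OPT' : Set (ℤ → ℝ), ∃ ext : (ℤ → ℝ) → (ℤ → ℝ),
      Set.BijOn ext OPT OPT' ∧
      -- (E1)
      Indep d v OPT' ∧
      (∀ q ∈ OPT', IsDOP d v q) ∧
      (∀ q ∈ OPT', closure (DOPset d v q) ⊆ Cstar) ∧
      (∀ q ∈ OPT', ∀ i ∈ Finset.Icc (1 : ℤ) (2 * (d : ℤ)),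
        ∃ l ∈ Lgrid d v I (2 * d), edgeOf d v q i ⊆ l) ∧
      (∀ q ∈ OPT', ∀ x : Pt, VertexOf d v q x → x ∈ Vgrid d v I (2 * d)) ∧
      -- (E2)
      (∀ p ∈ OPT, DOPset d v p ⊆ DOPset d v (ext p)) ∧
      -- (E3)
      E4cond d v OPT' Cstar := by
  have hw := gd hv
  have hd := hv.1
  set W := ww d v with hW
  obtain ⟨hCc, Cn, hCf, hCl, hCx⟩ := para hv I hC
  have hDP : ∀ p ∈ OPT, DP d W (tt d p) := fun p hp => DP_of_DOP hv (hIDOP p (hOsub hp))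
  have hper : ∀ p ∈ OPT, ∀ i, p (i + 2 * (d : ℤ)) = p i := fun p hp =>
    (hIDOP p (hOsub hp)).2.2.1
  haveI : Fintype OPT := (hfin.subset hOsub).fintype
  have hsubC : ∀ p, (∀ ch ∈ Cn, p ch.1 ≤ ch.2) → Kc W p ⊆ Cstar := by
    intro p hp x hx
    exact (hCx x).2 fun ch hch => (hx ch.1).trans (hp ch hch)
  have hB : ∀ p, DP d W p → (∀ ch ∈ Cn, p ch.1 ≤ ch.2) → ∀ i,
      p i ≤ sSup (NN W i '' Cstar) := by
    intro p hp hc i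
    have h1 : (NN W i) (XX W p i) ≤ sSup (NN W i '' Cstar) :=
      le_csSup (hCc.image (NN_cont W i)).bddAbove ⟨_, hsubC p hc (hp.X_mem hw i), rfl⟩
    rwa [hw.NN_X] at h1
  have hval : ∀ a : OPT, Val d W (Qs (fun a : OPT => tt d a.1) a) Cn (tt d a.1) := by
    intro a
    refine ⟨hDP _ a.2, ?_, ?_⟩
    · rintro q ⟨b, hb, rfl⟩
      apply hw.sep_of_disj (hDP _ a.2) (hDP _ b.2)
      rw [← DOPset_eq hv (hper _ a.2), ← DOPset_eq hv (hper _ b.2)]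
      exact (hOind _ a.2 _ b.2 (fun h => hb (Subtype.ext h.symm))).2
    · intro ch hch
      have h1 : XX W (tt d a.1) ch.1 ∈ Cstar := by
        apply hOin _ a.2
        rw [closure_eq hv (hDP _ a.2) (hper _ a.2)]
        exact (hDP _ a.2).X_mem hw _
      have h2 := (hCx _).1 h1 ch hch
      rwa [hw.NN_X] at h2
  obtain ⟨c', hge, hval', hbl, hlv⟩ := core hw hCf hB (LvG_ok hv I hCl)
    (c := fun a : OPT => tt d a.1) hval
    (fun a i => Lv_init hv I (hOsub a.2) (hIDOP _ (hOsub a.2)) i)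
  have hsep : ∀ a b : OPT, a ≠ b → SepD d (c' a) (c' b) := fun a b hab =>
    (hval' a).sep _ ⟨b, hab.symm, rfl⟩
  have hdis : ∀ a b : OPT, a ≠ b → ∀ x ∈ Op W (c' a), x ∉ Kc W (c' b) := fun a b hab x hx hy =>
    hw.sep_disj (hsep a b hab) hx hy
  have hset : ∀ a : OPT, DOPset d v (tt d (c' a)) = Op W (c' a) := fun a =>
    DOPset_tt hv (hval' a).dp
  have hdt : ∀ a : OPT, DP d W (tt d (tt d (c' a))) := fun a => by
    rw [tt_tt hv]; exact (hval' a).dp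
  have hpt : ∀ a : OPT, ∀ i, tt d (c' a) (i + 2 * (d : ℤ)) = tt d (c' a) i := fun a =>
    tt_per hv (hval' a).dp.per
  have hcl : ∀ a : OPT, closure (DOPset d v (tt d (c' a))) = Kc W (c' a) := fun a => by
    rw [hset, closure_Op (hval' a).dp.ne]
  have hdisj : ∀ a b : OPT, a ≠ b → DOPset d v (tt d (c' a)) ≠ DOPset d v (tt d (c' b)) ∧
      DOPset d v (tt d (c' a)) ∩ DOPset d v (tt d (c' b)) = ∅ := by
    intro a b hab
    rw [hset, hset]
    have h0 : Op W (c' a) ∩ Op W (c' b) = ∅ := by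
      ext x
      simp only [Set.mem_inter_iff, Set.mem_empty_iff_false, iff_false, not_and]
      intro h1 h2
      exact hdis a b hab x h1 fun i => (h2 i).le
    refine ⟨fun e => ?_, h0⟩
    rw [← e, Set.inter_self] at h0
    obtain ⟨x, hx⟩ := (hval' a).dp.ne
    have : x ∈ Op W (c' a) := hx
    rw [h0] at this
    exact this
  let ext : (ℤ → ℝ) → (ℤ → ℝ) := fun p => if h : p ∈ OPT then tt d (c' ⟨p, h⟩) else p
  have hext : ∀ a : OPT, ext a.1 = tt d (c' a) := fun a => by
    simp only [ext, dif_pos a.2]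
  have hall : ∀ {P : (ℤ → ℝ) → Prop}, (∀ a : OPT, P (tt d (c' a))) → ∀ q ∈ ext '' OPT, P q := by
    rintro P h _ ⟨p, hp, rfl⟩
    rw [hext ⟨p, hp⟩]
    exact h _
  refine ⟨ext '' OPT, ext, ⟨Set.mapsTo_image _ _, ?_, Set.surjOn_image _ _⟩,
    ?_, ?_, ?_, ?_, ?_, ?_, ?_⟩
  · intro p hp q hq hpq
    by_contra hne
    rw [hext ⟨p, hp⟩, hext ⟨q, hq⟩] at hpq
    exact (hdisj ⟨p, hp⟩ ⟨q, hq⟩ (fun h => hne (congrArg Subtype.val h))).1 (by rw [hpq])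
  · refine hall fun a => hall fun b hab => hdisj a b ?_
    rintro rfl
    exact hab rfl
  · exact hall fun a => DOP_of_DP hv (hval' a).dp
  · refine hall fun a => ?_
    rw [hcl]
    exact hsubC _ (hval' a).cn
  · refine hall fun a => fun i _ => ⟨_, hlv a (sg d i), ?_⟩
    rw [edge_eq hv (hdt a) (hpt a), tt_tt hv]
    exact fun x hx => hx.2
  · refine hall fun a => fun x hx => ?_
    obtain ⟨j, rfl⟩ := vert_X hv (hdt a) (hpt a) hx
    rw [tt_tt hv]
    refine Lv_Vof hv I (a := j) (b := j + 1) ?_ ?_ ?_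
    · intro h
      have := Int.le_of_dvd (by norm_num) ((dvd_neg).2 h)
      omega
    · rw [hw.NN_X]; exact hlv a j
    · rw [hw.NN_X1]; exact hlv a (j + 1)
  · intro p hp
    rw [hext ⟨p, hp⟩, hset, DOPset_eq hv (hper p hp)]
    exact fun x hx i => (hx i).trans_le (hge ⟨p, hp⟩ i)
  · refine hall fun a => fun i _ hne => ?_
    rw [tl_eq hv (hdt a) (hpt a), hd_eq hv (hdt a) (hpt a), tt_tt hv] at hne
    have hrel : ∀ x ∈ RR d W (c' a) (sg d i), x ∈ relintE d v (tt d (c' a)) i := fun x hx =>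
      R_sub_relint hv (hdt a) (hpt a) i (by rwa [tt_tt hv])
    rcases hbl a (sg d i) hne with ⟨q, ⟨b, hb, rfl⟩, x, hx, hxq⟩ | ⟨ch, hch, hdv, he⟩
    · left
      have hba : b ≠ a := hb
      refine ⟨tt d (c' b), ⟨b.1, b.2, hext b⟩, (hdisj b a hba).1, x, hrel x hx, ?_⟩
      refine ⟨by rw [hcl]; exact hxq, fun hi => ?_⟩
      have := interior_subset hi
      rw [hset] at this
      exact hdis b a hba x this (DP.R_sub hw (hval' a).dp _ hx)
    · right
      obtain ⟨x, hx⟩ := (hval' a).dp.R_nonempty hw _ hne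
      refine ⟨x, hrel x hx, front hv hCx
        (hsubC _ (hval' a).cn (DP.R_sub hw (hval' a).dp _ hx)) hch ?_⟩
      rw [hw.NN_congr hdv, hx.1, ← he]
      exact (per_dvd (hval' a).dp.per hdv).symm
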